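/- (Coefficients Theorem) For every ε > 0 there exists a constant q_ε such that the following holds: for every odd prime power q = p^v with q ≥ q_ε and all integers n ≥ 1 and k ≥ 1 with k < p and k < n(1/2 − ε) − 1, and for every choice of c₁, c₂, …, c_k in the field F with q elements, there exists a monic polynomial f(x) = xⁿ + c₁x^{n−1} + c₂x^{n−2} + ⋯ + c_{n−1}x + c_n ∈ F[x] of degree n whose coefficients of x^{n−1}, …, x^{n−k} are the prescribed values c₁, …, c_k and which is primitive: f has a root α in an algebraic closure of F whose multiplicative order is qⁿ − 1. -/

import Mathlib

/-!
Let `E` be the extension of `F` of degree `n`. Since `k < p`, Newton's identities show that the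
first `k` coefficients of the minimal polynomial of a generator `x` of `E` are determined by the
traces of `x, x², …, x^k` (`reverse_coeff_eq_of_ps_eq`, `trace_pow_eq_ps`). So it suffices to find
a generator `x` of the cyclic group `Eˣ` whose first `k` traces of powers are prescribed.

For `d` dividing `qⁿ - 1`, the number of `y` such that `x = y ^ d` has the prescribed traces is
`(qⁿ - 1) / q^k` up to `d k q^(n/2)`: expand in additive characters of `F ^ k`; the nontrivial ones
give sums of characters of polynomials of degree at most `d k` and prime to `p`, to which Weil's
bound applies (`count_bound`). Möbius inversion over `d` then produces a generator as soon as
`4 ^ ω(qⁿ - 1) k q^(n/2) < (qⁿ - 1) / q^k` (`exists_generator`), where `ω` is the number of prime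
factors. As `2 ^ ω(N) ≤ C N^δ`, this holds for `q` large in terms of `ε` when `k < n (1/2 - ε) - 1`
(`exists_main_gt_error`).

Weil's bound (`weil`) is proved from scratch. Over a field with `R²` elements, the
Stepanov–Bombieri method gives at most `R² + O(R)` points on the curve `z ^ p - z = G(x)`
(`card_points_le`). The fibres of the trace cover all `x`, so upper bounds for all
`z ^ p - z = G(x) - w` imply that the character sum is `O(R)` (`exp_sum_bound_sq`), with a constant
depending on `p` and `deg G` only. On the other hand, the character sums over the extensions of
`F` are the coefficients of the logarithmic derivative of an L-function, a polynomial of degree less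
than `deg G` (`lcoeff_eq_zero`, `lcoeff_newton`, `primeSum_eq_sum`). Letting the even degree of the
extension grow bounds its reciprocal roots by `√q` (`norm_sum_le_of_newton`).

The Stepanov–Bombieri method needs no theory of curves: functions on `z ^ p - z = G(x)` are
polynomials of degree less than `p` in `z`, and the pole order at infinity is a weighted degree,
which takes distinct values at distinct reduced monomials because `p` does not divide `deg G`.
Instead of Riemann–Roch, counting these monomials suffices.
-/

namespace CoeffThm

open Polynomial

/-! ### Weights and leading forms on the Artin–Schreier curve -/

section Weights

variable {E : Type} [Field E]

/-- `P(X, Y)` has weighted degree at most `n`, where `X` has weight `p` and `Y` has weight `D`. -/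
def WtLE (p D n : ℕ) (P : E[X][X]) : Prop :=
  ∀ j i, (P.coeff j).coeff i ≠ 0 → p * i + D * j ≤ n

variable {p D : ℕ}

theorem WtLE.mono {n m : ℕ} {P : E[X][X]} (h : WtLE p D n P) (hnm : n ≤ m) : WtLE p D m P :=
  fun j i hij => (h j i hij).trans hnm

theorem WtLE.zero (n : ℕ) : WtLE p D n (0 : E[X][X]) := fun j i hij => by simp at hij

theorem WtLE.add {n : ℕ} {P Q : E[X][X]} (hP : WtLE p D n P) (hQ : WtLE p D n Q) :
    WtLE p D n (P + Q) := by
  intro j i hij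
  by_cases h : (P.coeff j).coeff i = 0
  · refine hQ j i ?_
    simpa [h] using hij
  · exact hP j i h

theorem WtLE.neg {n : ℕ} {P : E[X][X]} (hP : WtLE p D n P) : WtLE p D n (-P) := by
  intro j i hij
  exact hP j i (by simpa using hij)

theorem WtLE.sub {n : ℕ} {P Q : E[X][X]} (hP : WtLE p D n P) (hQ : WtLE p D n Q) :
    WtLE p D n (P - Q) := by
  rw [sub_eq_add_neg]; exact hP.add hQ.neg

theorem WtLE.sum {ι : Type*} {n : ℕ} (s : Finset ι) (P : ι → E[X][X])
    (h : ∀ i ∈ s, WtLE p D n (P i)) : WtLE p D n (∑ i ∈ s, P i) :=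
  Finset.sum_induction P (WtLE p D n) (fun _ _ => WtLE.add) (WtLE.zero n) h

theorem WtLE.mul {n m : ℕ} {P Q : E[X][X]} (hP : WtLE p D n P) (hQ : WtLE p D m Q) :
    WtLE p D (n + m) (P * Q) := by
  intro j i hij
  rw [coeff_mul, finsetSum_coeff] at hij
  obtain ⟨⟨j1, j2⟩, hj, h1⟩ := Finset.exists_ne_zero_of_sum_ne_zero hij
  rw [coeff_mul] at h1
  obtain ⟨⟨i1, i2⟩, hi, h2⟩ := Finset.exists_ne_zero_of_sum_ne_zero h1
  have a := hP j1 i1 (left_ne_zero_of_mul h2)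
  have b := hQ j2 i2 (right_ne_zero_of_mul h2)
  have hi' : i1 + i2 = i := Finset.HasAntidiagonal.mem_antidiagonal.1 hi
  have hj' : j1 + j2 = j := Finset.HasAntidiagonal.mem_antidiagonal.1 hj
  subst hi' hj'
  nlinarith

theorem WtLE.one : WtLE p D 0 (1 : E[X][X]) := by
  intro j i hij
  rw [coeff_one] at hij
  split_ifs at hij with h
  · rw [coeff_one] at hij
    split_ifs at hij with h'
    · simp [h, h']
    · simp at hij
  · simp at hij

theorem WtLE.pow {n : ℕ} {P : E[X][X]} (hP : WtLE p D n P) (m : ℕ) :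
    WtLE p D (n * m) (P ^ m) := by
  induction m with
  | zero => simpa using WtLE.one
  | succ m ih => rw [pow_succ, Nat.mul_succ]; exact ih.mul hP

theorem WtLE.monomial (i j : ℕ) (a : E) :
    WtLE p D (p * i + D * j) (monomial j (Polynomial.monomial i a) : E[X][X]) := by
  intro j' i' h
  rw [coeff_monomial] at h
  split_ifs at h with h1
  · rw [coeff_monomial] at h
    split_ifs at h with h2
    · simp [h1, h2]
    · simp at h
  · simp at h

theorem exists_wtLE (P : E[X][X]) : ∃ n, WtLE p D n P := by
  refine ⟨P.support.sup fun j => p * (P.coeff j).natDegree + D * j, fun j i hij => ?_⟩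
  have hj : j ∈ P.support := by
    rw [mem_support_iff]; rintro h; simp [h] at hij
  refine le_trans ?_ (Finset.le_sup (f := fun j => p * (P.coeff j).natDegree + D * j) hj)
  have := le_natDegree_of_ne_zero hij
  gcongr

/-- The substitution `X ↦ t ^ p`, `Y ↦ γ t ^ D`, which turns weights into degrees. For the right
`γ` it records the leading behaviour of a function on the curve at its point at infinity. -/
noncomputable def lead (p D : ℕ) (γ : E) : E[X][X] →+* E[X] :=
  eval₂RingHom (expand E p : E[X] →+* E[X]) (C γ * X ^ D)

theorem lead_eq_sum (γ : E) (P : E[X][X]) :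
    lead p D γ P = ∑ j ∈ P.support, expand E p (P.coeff j) * (C γ * X ^ D) ^ j := by
  simp [lead, eval₂_eq_sum, Polynomial.sum]

theorem natDegree_term_le (γ : E) (Q : E[X]) (j : ℕ) :
    (expand E p Q * (C γ * X ^ D) ^ j).natDegree ≤ p * Q.natDegree + D * j := by
  refine natDegree_mul_le.trans ?_
  rw [natDegree_expand]
  have : ((C γ * X ^ D) ^ j).natDegree ≤ D * j := by
    refine natDegree_pow_le.trans ?_
    rw [mul_comm]
    exact Nat.mul_le_mul_right _ (natDegree_C_mul_X_pow_le _ _)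
  rw [mul_comm]; omega

theorem WtLE.natDegree_lead_le {n : ℕ} {P : E[X][X]} (h : WtLE p D n P) (γ : E) :
    (lead p D γ P).natDegree ≤ n := by
  rw [lead_eq_sum]
  refine natDegree_sum_le_of_forall_le _ _ fun j hj => (natDegree_term_le γ _ j).trans ?_
  exact h j _ (by simpa using hj)

/-- `P` has weighted degree at most `n`, and its leading form of weight `n` does not vanish at
infinity on the curve: `P` has a pole of order exactly `n` there. -/
def WtEq (p D : ℕ) (γ : E) (n : ℕ) (P : E[X][X]) : Prop :=
  WtLE p D n P ∧ (lead p D γ P).coeff n ≠ 0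

variable {γ : E}

theorem WtEq.ne_zero {n : ℕ} {P : E[X][X]} (h : WtEq p D γ n P) : P ≠ 0 := by
  rintro rfl; simpa using h.2

theorem WtEq.le {n m : ℕ} {P : E[X][X]} (h : WtEq p D γ n P) (h' : WtLE p D m P) : n ≤ m :=
  (le_natDegree_of_ne_zero h.2).trans (h'.natDegree_lead_le γ)

theorem WtEq.mul {n m : ℕ} {P Q : E[X][X]} (hP : WtEq p D γ n P) (hQ : WtEq p D γ m Q) :
    WtEq p D γ (n + m) (P * Q) := by
  refine ⟨hP.1.mul hQ.1, ?_⟩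
  rw [map_mul, coeff_mul_add_eq_of_natDegree_le (hP.1.natDegree_lead_le γ)
    (hQ.1.natDegree_lead_le γ)]
  exact mul_ne_zero hP.2 hQ.2

theorem WtEq.one : WtEq p D γ 0 (1 : E[X][X]) := ⟨WtLE.one, by simp⟩

theorem WtEq.pow {n : ℕ} {P : E[X][X]} (hP : WtEq p D γ n P) (m : ℕ) :
    WtEq p D γ (n * m) (P ^ m) := by
  induction m with
  | zero => simpa using WtEq.one
  | succ m ih => rw [pow_succ, Nat.mul_succ]; exact ih.mul hP

theorem WtEq.add {n m : ℕ} {P Q : E[X][X]} (hP : WtEq p D γ n P) (hQ : WtLE p D m Q)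
    (hmn : m < n) : WtEq p D γ n (P + Q) := by
  refine ⟨hP.1.add (hQ.mono hmn.le), ?_⟩
  rw [map_add, coeff_add, coeff_eq_zero_of_natDegree_lt (p := lead p D γ Q), add_zero]
  · exact hP.2
  · exact (hQ.natDegree_lead_le γ).trans_lt hmn

/-- Distinct monomials `X ^ i Y ^ j` with `j < p` have distinct weights. -/
theorem weight_inj (hp : p.Prime) (hD : ¬ p ∣ D) {i j i' j' : ℕ} (hj : j < p) (hj' : j' < p)
    (h : p * i + D * j = p * i' + D * j') : i = i' ∧ j = j' := by
  have hc : Nat.Coprime p D := (Nat.Prime.coprime_iff_not_dvd hp).2 hD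
  have h1 : D * j ≡ D * j' [MOD p] := by
    have : (p * i + D * j) % p = (p * i' + D * j') % p := by rw [h]
    simpa [Nat.ModEq, Nat.add_mod] using this
  have h2 : j ≡ j' [MOD p] := Nat.ModEq.cancel_left_of_coprime (by simpa using hc) h1
  have h3 : j = j' := by
    rwa [Nat.ModEq, Nat.mod_eq_of_lt hj, Nat.mod_eq_of_lt hj'] at h2
  subst h3
  exact ⟨Nat.eq_of_mul_eq_mul_left hp.pos (by omega), rfl⟩

/-- A nonzero reduced polynomial has an exact pole order at infinity: its monomials have distinct
weights, so no cancellation can occur in its leading form. -/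
theorem exists_wtEq (hp : p.Prime) (hD : ¬ p ∣ D) (hγ : γ ≠ 0) {P : E[X][X]} (h0 : P ≠ 0)
    (hdeg : P.natDegree < p) : ∃ n, WtEq p D γ n P := by
  obtain ⟨j, hj, hmax⟩ := P.support.exists_max_image
    (fun j => p * (P.coeff j).natDegree + D * j) (by simpa using h0)
  have lt : ∀ j ∈ P.support, j < p := fun j hj =>
    (le_natDegree_of_mem_supp j hj).trans_lt hdeg
  refine ⟨p * (P.coeff j).natDegree + D * j, ?_, ?_⟩
  · intro j' i' h
    have hj' : j' ∈ P.support := by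
      rw [mem_support_iff]; rintro h'; simp [h'] at h
    refine le_trans ?_ (hmax j' hj')
    have := le_natDegree_of_ne_zero h
    gcongr
  · rw [lead_eq_sum, finsetSum_coeff, Finset.sum_eq_single_of_mem j hj]
    · rw [mul_pow, ← C_pow, ← pow_mul, mul_left_comm, coeff_C_mul, coeff_mul_X_pow, mul_comm p,
        coeff_expand_mul hp.pos]
      refine mul_ne_zero (pow_ne_zero _ hγ) ?_
      simpa using hj
    · intro j' hj' hne
      refine coeff_eq_zero_of_natDegree_lt ((natDegree_term_le γ _ j').trans_lt ?_)
      refine lt_of_le_of_ne (hmax j' hj') fun h => hne ?_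
      exact (weight_inj hp hD (lt j' hj') (lt j hj) h).2

end Weights

section Curve

variable {E : Type} [Field E] {p D : ℕ} {γ : E} {G : E[X]}

/-- The Artin–Schreier equation `Y ^ p - Y - G(X)`. -/
noncomputable def asPoly (p : ℕ) (G : E[X]) : E[X][X] := X ^ p - (X + C G)

theorem asPoly_monic (hp : 1 < p) : (asPoly p G).Monic := by
  refine monic_X_pow_sub ?_
  rw [degree_X_add_C]
  exact_mod_cast hp

theorem asPoly_natDegree (hp : 1 < p) : (asPoly p G).natDegree = p := by
  unfold asPoly
  rw [natDegree_sub_eq_left_of_natDegree_lt] <;> simp [hp]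

theorem asPoly_wtLE (hp : 1 < p) (hG : G.natDegree = D) : WtLE p D (p * D) (asPoly p G) := by
  refine WtLE.sub ?_ (WtLE.add ?_ ?_)
  · have := WtLE.monomial (p := p) (D := D) 0 p (1 : E)
    simpa [← C_mul_X_pow_eq_monomial, mul_comm] using this
  · have := (WtLE.monomial (p := p) (D := D) 0 1 (1 : E))
    refine WtLE.mono (n := D) ?_ (by nlinarith)
    simpa [← C_mul_X_pow_eq_monomial, mul_comm] using this
  · intro j i h
    rw [coeff_C] at h
    split_ifs at h with h1
    · have := le_natDegree_of_ne_zero h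
      rw [hG] at this
      subst h1
      nlinarith
    · simp at h

theorem lead_asPoly_coeff (hp : 1 < p) (hD : 0 < D) (hG : G.natDegree = D)
    (hγ : γ ^ p = G.leadingCoeff) : (lead p D γ (asPoly p G)).coeff (p * D) = 0 := by
  have h1 : lead p D γ (asPoly p G) =
      (C γ * X ^ D) ^ p - (C γ * X ^ D + expand E p G) := by
    simp [lead, asPoly]
  rw [h1, mul_pow, ← C_pow, ← pow_mul, hγ]
  simp only [coeff_sub, coeff_add, coeff_C_mul, coeff_X_pow]
  rw [mul_comm p D, coeff_expand_mul (by omega), if_pos rfl, if_neg (by nlinarith)]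
  simp [leadingCoeff, hG]

/-- Reduction modulo the equation of the curve respects weights and leading forms. -/
theorem mod_asPoly (hp : 1 < p) (hD : 0 < D) (hG : G.natDegree = D)
    (hγ : γ ^ p = G.leadingCoeff) (n : ℕ) (P : E[X][X]) (hP : WtLE p D n P) :
    WtLE p D n (P %ₘ asPoly p G) ∧
      (lead p D γ (P %ₘ asPoly p G)).coeff n = (lead p D γ P).coeff n := by
  have hm := asPoly_monic (G := G) hp
  induction hN : P.natDegree using Nat.strong_induction_on generalizing P with
  | _ N ih =>
    subst hN
    by_cases hlt : P.natDegree < p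
    · rw [(modByMonic_eq_self_iff hm).2]
      · exact ⟨hP, rfl⟩
      · refine degree_lt_degree ?_
        rwa [asPoly_natDegree hp]
    · push Not at hlt
      have hP0 : P.leadingCoeff ≠ 0 := by
        rw [leadingCoeff_ne_zero]; rintro rfl; simp at hlt; omega
      set T : E[X][X] := monomial (P.natDegree - p) P.leadingCoeff with hT
      have hn : p * D ≤ n := by
        have := hP P.natDegree _ (by simpa using hP0 : (P.coeff P.natDegree).coeff
          (P.coeff P.natDegree).natDegree ≠ 0)
        nlinarith
      have hTw : WtLE p D (n - p * D) T := by
        intro j i h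
        rw [hT, coeff_monomial] at h
        split_ifs at h with h1
        · have := hP _ _ h
          subst h1
          have h3 : P.natDegree = (P.natDegree - p) + p := by omega
          have h2 : p * i + D * (P.natDegree - p) + p * D ≤ n := by
            calc _ = p * i + D * ((P.natDegree - p) + p) := by ring
              _ ≤ n := by rw [← h3]; exact this
          omega
        · simp at h
      have hTmw : WtLE p D n (asPoly p G * T) := by
        have := (asPoly_wtLE hp hG).mul hTw
        rwa [Nat.add_sub_cancel' hn] at this
      have hmod : (P - asPoly p G * T) %ₘ asPoly p G = P %ₘ asPoly p G := by
        rw [sub_modByMonic, self_mul_modByMonic hm, sub_zero]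
      have hnd : (P - asPoly p G * T).natDegree < P.natDegree := by
        have hTd : T.natDegree = P.natDegree - p := by
          rw [hT, natDegree_monomial_eq _ hP0]
        have hmT : (asPoly p G * T).natDegree = P.natDegree := by
          rw [hm.natDegree_mul' (by rw [hT]; simpa using hP0), hTd, asPoly_natDegree hp]
          omega
        have hlead : (asPoly p G * T).leadingCoeff = P.leadingCoeff := by
          rw [leadingCoeff_mul, hm.leadingCoeff, one_mul, hT, leadingCoeff_monomial]
        have hPne : P ≠ 0 := by rintro rfl; simp at hP0
        have hmTne : asPoly p G * T ≠ 0 := by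
          intro h; rw [h] at hlead; exact hP0 (by simpa using hlead.symm)
        have hdlt := degree_sub_lt_left
          (by rw [degree_eq_natDegree hPne, degree_eq_natDegree hmTne, hmT]) hPne hlead.symm
        by_cases hz : P - asPoly p G * T = 0
        · rw [hz, natDegree_zero]; omega
        · exact natDegree_lt_natDegree hz hdlt
      obtain ⟨h1, h2⟩ := ih _ hnd (P - asPoly p G * T) (hP.sub hTmw) rfl
      rw [hmod] at h1 h2
      refine ⟨h1, h2.trans ?_⟩
      rw [map_sub, coeff_sub, map_mul]
      have := coeff_mul_add_eq_of_natDegree_le ((asPoly_wtLE hp hG).natDegree_lead_le γ)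
        (hTw.natDegree_lead_le γ)
      rw [Nat.add_sub_cancel' hn] at this
      rw [this, lead_asPoly_coeff hp hD hG hγ]
      simp

end Curve

/-! ### Zeros and poles of functions on the curve -/

section Riemann

/-- Exponents `(i, j)` of the reduced monomials `X ^ i Y ^ j`, `j < p`, of weight at most `n`. -/
def idx (p D n : ℕ) : Finset (ℕ × ℕ) :=
  (Finset.range (n + 1) ×ˢ Finset.range p).filter fun x => p * x.1 + D * x.2 ≤ n

variable {p D : ℕ}

theorem mem_idx (hp : 0 < p) {n : ℕ} {x : ℕ × ℕ} :
    x ∈ idx p D n ↔ x.2 < p ∧ p * x.1 + D * x.2 ≤ n := by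
  simp only [idx, Finset.mem_filter, Finset.mem_product, Finset.mem_range]
  constructor
  · rintro ⟨⟨_, h⟩, h'⟩; exact ⟨h, h'⟩
  · rintro ⟨h, h'⟩
    exact ⟨⟨by nlinarith, h⟩, h'⟩

theorem card_idx_add (hp : p.Prime) (hD : ¬ p ∣ D) (s M : ℕ) :
    (idx p D (s + M)).card ≤ (idx p D s).card + M := by
  have hsub : idx p D s ⊆ idx p D (s + M) := fun x hx => by
    rw [mem_idx hp.pos] at hx ⊢; omega
  rw [← Finset.card_sdiff_add_card_eq_card hsub, add_comm]
  gcongr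
  have : (Finset.Ioc s (s + M)).card = M := by simp
  conv_rhs => rw [← this]
  refine Finset.card_le_card_of_injOn (fun x => p * x.1 + D * x.2) ?_ ?_
  · intro x hx
    simp only [Finset.coe_sdiff, Set.mem_sdiff, Finset.mem_coe, mem_idx hp.pos] at hx
    simp only [Finset.coe_Ioc, Set.mem_Ioc]
    omega
  · intro x hx y hy h
    simp only [Finset.coe_sdiff, Set.mem_sdiff, Finset.mem_coe, mem_idx hp.pos] at hx hy
    have := weight_inj hp hD hx.1.1 hy.1.1 h
    exact Prod.ext this.1 this.2

theorem card_idx_le (hp : p.Prime) (hD : ¬ p ∣ D) (n : ℕ) : (idx p D n).card ≤ n + 1 := by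
  have h := card_idx_add hp hD 0 n
  have h0 : (idx p D 0).card ≤ 1 := by
    refine Finset.card_le_one.2 fun x hx y hy => ?_
    rw [mem_idx hp.pos] at hx hy
    have := weight_inj (i := x.1) (i' := y.1) hp hD hx.1 hy.1 (by omega)
    exact Prod.ext this.1 this.2
  rw [zero_add] at h
  omega

theorem le_card_idx (hp : p.Prime) (hD : ¬ p ∣ D) (n : ℕ) :
    n + 1 ≤ (idx p D n).card + p * D := by
  have hsub : Finset.Icc (p * D) n ⊆ (idx p D n).image fun x => p * x.1 + D * x.2 := by
    intro N hN
    rw [Finset.mem_Icc] at hN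
    have hc : Nat.Coprime D p := ((Nat.Prime.coprime_iff_not_dvd hp).2 hD).symm
    obtain ⟨j, hj, hjm⟩ : ∃ j, j < p ∧ D * j ≡ N [MOD p] := by
      obtain ⟨m, hm⟩ := Nat.exists_mul_mod_eq_one_of_coprime hc hp.one_lt
      refine ⟨(m * N) % p, Nat.mod_lt _ hp.pos, ?_⟩
      calc D * ((m * N) % p) ≡ D * (m * N) [MOD p] := (Nat.mod_modEq _ _).mul_left _
        _ = (D * m) * N := by ring
        _ ≡ 1 * N [MOD p] := Nat.ModEq.mul_right _ (by
            rw [Nat.ModEq, hm.2, Nat.mod_eq_of_lt hp.one_lt])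
        _ = N := one_mul N
    have hle : D * j ≤ N := by nlinarith [Nat.mul_le_mul_left D hj.le]
    obtain ⟨i, hi⟩ := (Nat.modEq_iff_dvd' hle).1 hjm
    rw [Finset.mem_image]
    exact ⟨(i, j), (mem_idx hp.pos).2 ⟨hj, by simp only; omega⟩, by simp only; omega⟩
  have := (Finset.card_le_card hsub).trans Finset.card_image_le
  rw [Nat.card_Icc] at this
  omega

variable {E : Type} [Field E]

/-- The reduced polynomial with prescribed coefficients. -/
noncomputable def ofCoord (p D n : ℕ) : (idx p D n → E) →ₗ[E] E[X][X] where
  toFun c := ∑ x, monomial x.1.2 (monomial x.1.1 (c x))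
  map_add' a b := by simp only [Pi.add_apply, map_add, Finset.sum_add_distrib]
  map_smul' a b := by
    simp only [Pi.smul_apply, Finset.smul_sum, RingHom.id_apply]
    refine Finset.sum_congr rfl fun x _ => ?_
    rw [smul_monomial, smul_monomial]

/-- The coefficients at the reduced monomials of weight at most `n`. -/
noncomputable def toCoord (p D n : ℕ) : E[X][X] →ₗ[E] (idx p D n → E) where
  toFun P x := (P.coeff x.1.2).coeff x.1.1
  map_add' a b := by ext; simp
  map_smul' a b := by ext; simp

theorem ofCoord_coeff (n : ℕ) (c : idx p D n → E) (i j : ℕ) :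
    ((ofCoord p D n c).coeff j).coeff i = if h : (i, j) ∈ idx p D n then c ⟨(i, j), h⟩ else 0 := by
  simp only [ofCoord, LinearMap.coe_mk, AddHom.coe_mk, finsetSum_coeff]
  split_ifs with h
  · rw [Finset.sum_eq_single (⟨(i, j), h⟩ : idx p D n)]
    · simp
    · rintro ⟨⟨i', j'⟩, h'⟩ - hne
      simp only [coeff_monomial]
      split_ifs with h1
      · rw [coeff_monomial, if_neg]
        rintro rfl; subst h1; exact hne rfl
      · simp
    · simp
  · refine Finset.sum_eq_zero fun x _ => ?_
    obtain ⟨⟨i', j'⟩, h'⟩ := x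
    simp only [coeff_monomial]
    split_ifs with h1
    · rw [coeff_monomial, if_neg]
      rintro rfl; subst h1; exact h h'
    · simp

theorem toCoord_ofCoord (n : ℕ) (c : idx p D n → E) : toCoord p D n (ofCoord p D n c) = c := by
  ext ⟨⟨i, j⟩, h⟩
  simp [toCoord, ofCoord_coeff, h]

theorem ofCoord_wtLE (hp : 0 < p) (n : ℕ) (c : idx p D n → E) :
    WtLE p D n (ofCoord p D n c) := by
  intro j i h
  rw [ofCoord_coeff] at h
  split_ifs at h with h1
  · exact ((mem_idx hp).1 h1).2
  · simp at h

theorem ofCoord_natDegree (hp : 0 < p) (n : ℕ) (c : idx p D n → E) :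
    (ofCoord p D n c).natDegree < p := by
  have : (ofCoord p D n c).degree < p := by
    rw [degree_lt_iff_coeff_zero]
    intro m hm
    ext i
    rw [ofCoord_coeff, dif_neg]
    · simp
    · rw [mem_idx hp]; simp; omega
  by_cases h0 : ofCoord p D n c = 0
  · simpa [h0] using hp
  · rwa [← natDegree_lt_iff_degree_lt h0] at this

theorem ofCoord_toCoord (hp : 0 < p) {n : ℕ} {P : E[X][X]} (hP : WtLE p D n P)
    (hdeg : P.natDegree < p) : ofCoord p D n (toCoord p D n P) = P := by
  ext j i
  rw [ofCoord_coeff]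
  split_ifs with h
  · rfl
  · by_contra hne
    have h1 := hP j i (Ne.symm hne)
    refine h ((mem_idx hp).2 ⟨?_, h1⟩)
    refine lt_of_le_of_lt (le_natDegree_of_ne_zero ?_) hdeg
    intro h2; simp [h2] at hne

variable {γ : E} {G : E[X]}

theorem mod_natDegree_lt (hp : 1 < p) (P : E[X][X]) : (P %ₘ asPoly p G).natDegree < p := by
  have h := natDegree_modByMonic_lt P (asPoly_monic (G := G) hp) (by
    intro h; have := asPoly_natDegree (G := G) hp; rw [h] at this; simp at this; omega)
  rwa [asPoly_natDegree hp] at h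

/-- Reduction modulo the equation of the curve does not change values at points of the curve. -/
theorem evalEval_mod {x y : E} (h : y ^ p - y = G.eval x) (P : E[X][X]) :
    (P %ₘ asPoly p G).evalEval x y = P.evalEval x y := by
  conv_rhs => rw [← modByMonic_add_div P (asPoly p G)]
  rw [evalEval_add, evalEval_mul]
  have : (asPoly p G).evalEval x y = 0 := by
    simp only [asPoly, evalEval_sub, evalEval_pow, evalEval_X, evalEval_add, evalEval_C]
    rw [← h]; ring
  rw [this]; ring

/-- Values at finitely many points, as a linear map. -/
noncomputable def evs (S : Finset (E × E)) : E[X][X] →ₗ[E] (S → E) where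
  toFun P x := P.evalEval x.1.1 x.1.2
  map_add' a b := by ext; simp [evalEval_add]
  map_smul' a b := by ext; simp [evalEval_smul]

theorem evs_surjective [Fintype E] (S : Finset (E × E)) : Function.Surjective (evs S) := by
  classical
  intro v
  have h1 : 1 < Fintype.card E := Fintype.one_lt_card
  refine ⟨∑ s : S, C (C (v s)) * ((1 - (C (X - C s.1.1)) ^ (Fintype.card E - 1)) *
    (1 - (X - C (C s.1.2)) ^ (Fintype.card E - 1))), ?_⟩
  ext ⟨⟨x, y⟩, hs⟩
  simp only [evs, LinearMap.coe_mk, AddHom.coe_mk]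
  rw [evalEval_finsetSum, Finset.sum_eq_single (⟨(x, y), hs⟩ : S)]
  · have : Fintype.card E - 1 ≠ 0 := by omega
    simp [evalEval_mul, evalEval_sub, evalEval_pow, evalEval_C, evalEval_X, this]
  · rintro ⟨⟨x', y'⟩, hs'⟩ - hne
    simp only [evalEval_mul, evalEval_sub, evalEval_pow, evalEval_C, evalEval_X, eval_sub, eval_C,
      eval_X, evalEval_one]
    by_cases hx : x - x' = 0
    · have hy : y - y' ≠ 0 := by
        intro hy
        apply hne
        rw [sub_eq_zero] at hx hy
        subst hx hy; rfl
      rw [FiniteField.pow_card_sub_one_eq_one _ hy]; simp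
    · rw [FiniteField.pow_card_sub_one_eq_one _ hx]; simp
  · simp

/-- A function on the curve with a pole of order `M` at infinity has at most `M` zeros. Its
multiples `K · P` with `P` of weight at most `s` make up all but `M` dimensions of the functions of
weight at most `s + M`, while these separate any given finite set of points once `s` is large. -/
theorem card_zeros_le [Fintype E] (hp : p.Prime) (hD : ¬ p ∣ D) (hG : G.natDegree = D)
    (hγ : γ ^ p = G.leadingCoeff) (hγ0 : γ ≠ 0) {M : ℕ} {K : E[X][X]} (hK : WtEq p D γ M K)
    (S : Finset (E × E)) (hS : ∀ x ∈ S, x.2 ^ p - x.2 = G.eval x.1)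
    (hz : ∀ x ∈ S, K.evalEval x.1 x.2 = 0) : S.card ≤ M := by
  have hD0 : 0 < D := Nat.pos_of_ne_zero (by rintro rfl; simp at hD)
  have hm := asPoly_monic (G := G) hp.one_lt
  obtain ⟨s, hs⟩ : ∃ s, ∀ v : S → E, ∃ P : E[X][X], WtLE p D s P ∧ evs S P = v := by
    choose P hP using evs_surjective (E := E) S
    choose w hw using exists_wtLE (p := p) (D := D) (E := E)
    classical
    exact ⟨Finset.univ.sup fun v => w (P v), fun v => ⟨P v, (hw _).mono
      (Finset.le_sup (f := fun v => w (P v)) (Finset.mem_univ v)), hP v⟩⟩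
  -- `ev` evaluates functions of weight at most `s + M` at the points of `S`, and `mu` is
  -- multiplication by `K` from weight at most `s` to weight at most `s + M`.
  let ev : (idx p D (s + M) → E) →ₗ[E] (S → E) := evs S ∘ₗ ofCoord p D (s + M)
  let mu : (idx p D s → E) →ₗ[E] (idx p D (s + M) → E) :=
    toCoord p D (s + M) ∘ₗ ((modByMonicHom (asPoly p G)).restrictScalars E) ∘ₗ
      (LinearMap.mulLeft E K) ∘ₗ ofCoord p D s
  have hmu : ∀ c, mu c = toCoord p D (s + M) ((K * ofCoord p D s c) %ₘ asPoly p G) :=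
    fun c => rfl
  have hwt : ∀ c, WtLE p D (s + M) ((K * ofCoord p D s c) %ₘ asPoly p G) := fun c =>
    (mod_asPoly hp.one_lt hD0 hG hγ (s + M) _ (by
      rw [add_comm]; exact hK.1.mul (ofCoord_wtLE hp.pos _ _))).1
  have hsurj : Function.Surjective ev := by
    intro v
    obtain ⟨P, hP, hPv⟩ := hs v
    refine ⟨toCoord p D (s + M) (P %ₘ asPoly p G), ?_⟩
    simp only [ev, LinearMap.comp_apply]
    rw [ofCoord_toCoord hp.pos ((mod_asPoly hp.one_lt hD0 hG hγ _ _
      (hP.mono (Nat.le_add_right _ _))).1) (mod_natDegree_lt hp.one_lt _), ← hPv]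
    ext x
    exact evalEval_mod (hS x.1 x.2) P
  have hinj : Function.Injective mu := by
    rw [← LinearMap.ker_eq_bot, LinearMap.ker_eq_bot']
    intro c hc
    by_contra hc0
    have hne : ofCoord p D s c ≠ 0 := by
      intro h; apply hc0; rw [← toCoord_ofCoord s c, h, map_zero]
    obtain ⟨n, hn⟩ := exists_wtEq hp hD hγ0 hne (ofCoord_natDegree hp.pos _ _)
    have h1 := hK.mul hn
    have h2 := mod_asPoly hp.one_lt hD0 hG hγ _ _ h1.1
    have h3 : (K * ofCoord p D s c) %ₘ asPoly p G = 0 := by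
      rw [← ofCoord_toCoord hp.pos (hwt c) (mod_natDegree_lt hp.one_lt _), ← hmu, hc, map_zero]
    rw [h3] at h2
    exact h1.2 (by simpa using h2.2.symm)
  have hcomp : LinearMap.range mu ≤ LinearMap.ker ev := by
    rintro _ ⟨c, rfl⟩
    rw [LinearMap.mem_ker, hmu]
    simp only [ev, LinearMap.comp_apply]
    rw [ofCoord_toCoord hp.pos (hwt c) (mod_natDegree_lt hp.one_lt _)]
    ext x
    change evalEval x.1.1 x.1.2 _ = 0
    rw [evalEval_mod (hS x.1 x.2), evalEval_mul, hz x.1 x.2, zero_mul]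
  have h1 := Submodule.finrank_mono hcomp
  have h2 := LinearMap.finrank_range_add_finrank_ker ev
  rw [LinearMap.range_eq_top.2 hsurj, finrank_top] at h2
  rw [LinearMap.finrank_range_of_inj hinj] at h1
  simp only [Module.finrank_fintype_fun_eq_card, Fintype.card_coe] at h1 h2
  have h3 := card_idx_add hp hD s M
  omega

end Riemann

/-! ### Counting points by the Stepanov–Bombieri method -/

section Points

variable {p D : ℕ} {E : Type} [Field E] {γ : E} {G : E[X]}

theorem WtEq.monomial_one (hγ0 : γ ≠ 0) (i j : ℕ) :
    WtEq p D γ (p * i + D * j) (monomial j (Polynomial.monomial i 1) : E[X][X]) := by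
  refine ⟨WtLE.monomial i j 1, ?_⟩
  have : lead p D γ (monomial j (Polynomial.monomial i 1)) =
      C (γ ^ j) * X ^ (p * i + D * j) := by
    simp only [lead, coe_eval₂RingHom, eval₂_monomial, RingHom.coe_coe, expand_monomial]
    rw [← C_mul_X_pow_eq_monomial, mul_pow, ← pow_mul, C_pow, C_1]
    ring
  rw [this, coeff_C_mul, coeff_X_pow, if_pos rfl, mul_one]
  exact pow_ne_zero _ hγ0

/-- The combination `∑ a_x s_x ^ R`, with `s_x` the reduced monomials and `a_x` of weight less than
`R`, has a pole at infinity unless all `a_x` vanish, because its terms have distinct pole orders. -/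
theorem exists_wtEq_sum (hp : p.Prime) (hD : ¬ p ∣ D) (hγ0 : γ ≠ 0) {l m R : ℕ} (hl : l < R)
    (a : idx p D m → idx p D l → E) (ha : a ≠ 0) :
    ∃ n ≤ l + m * R, WtEq p D γ n
      (∑ x, ofCoord p D l (a x) * (monomial x.1.2 (monomial x.1.1 1) : E[X][X]) ^ R) := by
  classical
  set w : idx p D m → ℕ := fun x => p * x.1.1 + D * x.1.2 with hw
  have hne : (Finset.univ.filter fun x => a x ≠ 0).Nonempty := by
    obtain ⟨x, hx⟩ := Function.ne_iff.1 ha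
    exact ⟨x, by simpa using hx⟩
  obtain ⟨x, hx, hmax⟩ := Finset.exists_max_image _ w hne
  simp only [Finset.mem_filter, Finset.mem_univ, true_and] at hx hmax
  have hne : ofCoord p D l (a x) ≠ 0 := by
    intro h; apply hx; rw [← toCoord_ofCoord l (a x), h, map_zero]
  obtain ⟨n, hn⟩ := exists_wtEq hp hD hγ0 hne (ofCoord_natDegree hp.pos _ _)
  have hnl := hn.le (ofCoord_wtLE hp.pos _ _)
  have hwm : w x ≤ m := ((mem_idx hp.pos).1 x.2).2
  have hlt : ∀ y, y ≠ x → a y ≠ 0 → w y < w x := by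
    intro y hy hay
    refine lt_of_le_of_ne (hmax y hay) fun h => hy ?_
    have := weight_inj hp hD ((mem_idx hp.pos).1 y.2).1 ((mem_idx hp.pos).1 x.2).1 h
    exact Subtype.ext (Prod.ext this.1 this.2)
  refine ⟨n + w x * R, by gcongr, ?_⟩
  have hmain := hn.mul ((WtEq.monomial_one (D := D) hγ0 x.1.1 x.1.2).pow R)
  rw [← Finset.add_sum_erase _ _ (Finset.mem_univ x)]
  rcases Nat.eq_zero_or_pos (w x) with h0 | h0
  · rw [Finset.sum_eq_zero, add_zero]
    · exact hmain
    · intro y hy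
      rw [Finset.mem_erase] at hy
      by_cases hay : a y = 0
      · rw [hay, map_zero, zero_mul]
      · have := hlt y hy.1 hay; omega
  · refine hmain.add (m := l + (w x - 1) * R) (WtLE.sum _ _ fun y hy => ?_) ?_
    · rw [Finset.mem_erase] at hy
      by_cases hay : a y = 0
      · rw [hay, map_zero, zero_mul]; exact WtLE.zero _
      · have := hlt y hy.1 hay
        refine ((ofCoord_wtLE hp.pos _ _).mul ((WtLE.monomial y.1.1 y.1.2 1).pow R)).mono ?_
        have h2 : p * y.1.1 + D * y.1.2 ≤ w x - 1 := by
          change w y ≤ _; omega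
        gcongr
    · obtain ⟨u, hu⟩ : ∃ u, w x = u + 1 := ⟨w x - 1, by omega⟩
      change _ < n + w x * R
      rw [hu, Nat.add_sub_cancel, add_mul, one_mul]
      omega

/-- Bombieri's form of Stepanov's argument: over a field with `R ^ 2` elements, a counting argument
yields `a_x`, not all zero, with `∑ a_x ^ R s_x = 0` on the curve. At rational points this is the
`R`-th power of `∑ a_x s_x ^ R`, a function with few poles, hence with few zeros. -/
theorem card_points_le_of_large [Fintype E] [CharP E p] (hp : p.Prime) (hD : ¬ p ∣ D)
    (hG : G.natDegree = D) {s : ℕ} (hE : Fintype.card E = (p ^ s) ^ 2)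
    (hR : (p * D) ^ 2 + 3 * (p * D) + 1 < p ^ s) (S : Finset (E × E))
    (hS : ∀ x ∈ S, x.2 ^ p - x.2 = G.eval x.1) :
    S.card ≤ (p ^ s) ^ 2 + (2 * (p * D) + 1) * p ^ s := by
  classical
  have : Fact p.Prime := ⟨hp⟩
  have hD0 : 0 < D := Nat.pos_of_ne_zero (by rintro rfl; simp at hD)
  obtain ⟨γ, hγ⟩ : ∃ γ : E, γ ^ p = G.leadingCoeff := surjective_frobenius E p G.leadingCoeff
  have hγ0 : γ ≠ 0 := by
    rintro rfl
    rw [zero_pow hp.ne_zero] at hγ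
    have := leadingCoeff_eq_zero.1 hγ.symm
    rw [this, natDegree_zero] at hG; omega
  set R := p ^ s with hRdef
  set g := p * D with hg
  obtain ⟨l, hl⟩ : ∃ l, R = l + 1 := ⟨R - 1, by omega⟩
  set m := R + 2 * g with hm
  let F : (idx p D m → idx p D l → E) → E[X][X] := fun a =>
    ∑ x, ofCoord p D l (a x) ^ R * (monomial x.1.2 (monomial x.1.1 1) : E[X][X])
  have hFsub : ∀ a b, F (a - b) = F a - F b := by
    intro a b
    simp only [F, Pi.sub_apply, map_sub]
    rw [← Finset.sum_sub_distrib]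
    refine Finset.sum_congr rfl fun x _ => ?_
    rw [hRdef, sub_pow_char_pow, sub_mul]
  have hFwt : ∀ a, WtLE p D (l * R + m) (F a) := fun a => WtLE.sum _ _ fun x _ =>
    ((ofCoord_wtLE hp.pos _ _).pow R).mul
      ((WtLE.monomial x.1.1 x.1.2 1).mono ((mem_idx hp.pos).1 x.2).2)
  let T : (idx p D m → idx p D l → E) → (idx p D (l * R + m) → E) := fun a =>
    toCoord p D (l * R + m) (F a %ₘ asPoly p G)
  -- `T` is additive between finite groups and its source is larger than its target.
  obtain ⟨a, b, hab, hT⟩ : ∃ a b, a ≠ b ∧ T a = T b := by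
    apply Fintype.exists_ne_map_eq_of_card_lt
    simp only [Fintype.card_fun, Fintype.card_coe]
    rw [← pow_mul]
    refine Nat.pow_lt_pow_right Fintype.one_lt_card ?_
    have h1 := le_card_idx hp hD l
    have h2 := le_card_idx hp hD m
    have h3 := card_idx_le hp hD (l * R + m)
    obtain ⟨u, hu⟩ : ∃ u, R = u + g := ⟨R - g, by have : g ≤ R := by nlinarith
                                                  omega⟩
    have h4 : u ≤ (idx p D l).card := by omega
    have h5 : u + 2 * g + 1 ≤ (idx p D m).card := by omega
    have h6 := Nat.mul_le_mul h4 h5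
    have h7 : g ^ 2 + 2 * g + 1 < u := by omega
    have h8 : l * R + R = R * R := by rw [hl]; ring
    have h9 : R * R = u * u + 2 * (u * g) + g * g := by rw [hu]; ring
    nlinarith
  have hc : a - b ≠ 0 := sub_ne_zero.2 hab
  have hTc : F (a - b) %ₘ asPoly p G = 0 := by
    rw [← ofCoord_toCoord hp.pos (mod_asPoly (G := G) hp.one_lt hD0 hG hγ _ _ (hFwt (a - b))).1
      (mod_natDegree_lt hp.one_lt _), hFsub, sub_modByMonic, map_sub, map_sub]
    change ofCoord p D _ (T a) - ofCoord p D _ (T b) = 0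
    rw [hT, sub_self]
  obtain ⟨n, hn, hK⟩ := exists_wtEq_sum (γ := γ) hp hD hγ0 (R := R) (by omega) (a - b) hc
  refine (card_zeros_le hp hD hG hγ hγ0 hK S hS fun x hx => ?_).trans ?_
  · have h1 : (F (a - b)).evalEval x.1 x.2 = 0 := by
      rw [← evalEval_mod (hS x hx), hTc, evalEval_zero]
    have h2 : (∑ y, ofCoord p D l ((a - b) y) *
        (monomial y.1.2 (monomial y.1.1 1) : E[X][X]) ^ R).evalEval x.1 x.2 ^ R = 0 := by
      rw [← h1]
      simp only [F, evalEval_finsetSum, evalEval_mul, evalEval_pow]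
      rw [hRdef, sum_pow_char_pow]
      refine Finset.sum_congr rfl fun y _ => ?_
      -- Here the point is rational: `R ^ 2`-th powers of its coordinates are the coordinates.
      rw [mul_pow, ← pow_mul, ← sq, ← hE, FiniteField.pow_card]
    exact eq_zero_of_pow_eq_zero h2
  · refine hn.trans ?_
    rw [hm]; nlinarith

/-- The constant absorbs the finitely many fields that are too small for the counting argument. -/
theorem card_points_le (hp : p.Prime) (hD : ¬ p ∣ D) : ∃ C : ℕ, ∀ (E : Type) [Field E] [Fintype E]
    [CharP E p] (s : ℕ), Fintype.card E = (p ^ s) ^ 2 → ∀ G : E[X], G.natDegree = D →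
    ∀ S : Finset (E × E), (∀ x ∈ S, x.2 ^ p - x.2 = G.eval x.1) →
    S.card ≤ (p ^ s) ^ 2 + C * p ^ s := by
  refine ⟨(2 * (p * D) + 1) + ((p * D) ^ 2 + 3 * (p * D) + 1) ^ 3, ?_⟩
  intro E _ _ _ s hE G hG S hS
  by_cases hR : (p * D) ^ 2 + 3 * (p * D) + 1 < p ^ s
  · refine (card_points_le_of_large hp hD hG hE hR S hS).trans ?_
    exact Nat.add_le_add_left (Nat.mul_le_mul_right _ (Nat.le_add_right _ _)) _
  · push Not at hR
    have h1 : S.card ≤ (p ^ s) ^ 3 * p ^ s := by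
      refine S.card_le_univ.trans ?_
      rw [Fintype.card_prod, hE]
      apply le_of_eq; ring
    have h2 : (p ^ s) ^ 3 * p ^ s ≤ ((p * D) ^ 2 + 3 * (p * D) + 1) ^ 3 * p ^ s := by gcongr
    refine (h1.trans h2).trans ?_
    rw [add_mul]
    exact (Nat.le_add_left _ _).trans (Nat.le_add_left _ _)

end Points

/-! ### Character sums over fields of square cardinality -/

section ArtinSchreier

variable {p : ℕ} [Fact p.Prime] {E : Type} [Field E] [Fintype E] [Algebra (ZMod p) E]

/-- Additive Hilbert 90 over the prime field. The kernel of `z ↦ z ^ p - z` is the prime field, so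
the image has the dimension of the kernel of the trace, which contains it. -/
theorem exists_pow_sub_eq {w : E} (hw : Algebra.trace (ZMod p) E w = 0) :
    ∃ z : E, z ^ p - z = w := by
  have hp : p.Prime := Fact.out
  have : CharP E p := charP_of_injective_algebraMap (algebraMap (ZMod p) E).injective p
  let φ : E →ₗ[ZMod p] E := (FiniteField.frobeniusAlgEquiv (ZMod p) E p).toLinearMap
  have hφ : ∀ z, φ z = z ^ p := fun z => by simp [φ]
  let L : E →ₗ[ZMod p] E := φ - LinearMap.id
  have hL : ∀ z, L z = z ^ p - z := fun z => by simp [L, hφ]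
  have hle : LinearMap.range L ≤ LinearMap.ker (Algebra.trace (ZMod p) E) := by
    rintro _ ⟨z, rfl⟩
    rw [LinearMap.mem_ker]
    simp only [L, LinearMap.sub_apply, LinearMap.id_apply, map_sub, sub_eq_zero]
    exact Algebra.trace_eq_of_algEquiv (FiniteField.frobeniusAlgEquiv (ZMod p) E p) z
  have hker : Module.finrank (ZMod p) (LinearMap.ker L) ≤ 1 := by
    have h1 : Nat.card (LinearMap.ker L) = p ^ Module.finrank (ZMod p) (LinearMap.ker L) := by
      have := Module.natCard_eq_pow_finrank (K := ZMod p) (V := LinearMap.ker L)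
      rwa [Nat.card_zmod] at this
    have h2 : Nat.card (LinearMap.ker L) ≤ p := by
      have hne : (X ^ p - X : E[X]) ≠ 0 := FiniteField.X_pow_card_sub_X_ne_zero E hp.one_lt
      have h3 : ((LinearMap.ker L : Submodule (ZMod p) E) : Set E) ⊆
          ((X ^ p - X : E[X]).rootSet E) := by
        intro z hz
        have : L z = 0 := hz
        rw [hL] at this
        rw [mem_rootSet]
        exact ⟨hne, by simpa using this⟩
      have h4 := Set.ncard_le_ncard h3 (Set.toFinite _)
      have h5 : ((X ^ p - X : E[X]).rootSet E).ncard ≤ p := by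
        have := ncard_rootSet_le (X ^ p - X : E[X]) E
        rwa [FiniteField.X_pow_card_sub_X_natDegree_eq E hp.one_lt] at this
      exact h4.trans h5
    rw [h1] at h2
    by_contra h
    push Not at h
    have : p ^ 1 < p ^ Module.finrank (ZMod p) (LinearMap.ker L) :=
      Nat.pow_lt_pow_right hp.one_lt h
    rw [pow_one] at this
    omega
  have hr := LinearMap.finrank_range_add_finrank_ker L
  have ht := LinearMap.finrank_range_add_finrank_ker (Algebra.trace (ZMod p) E)
  rw [LinearMap.range_eq_top.2 (Algebra.trace_surjective (ZMod p) E), finrank_top,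
    Module.finrank_self] at ht
  have heq := Submodule.eq_of_le_of_finrank_le hle (by omega)
  have : w ∈ LinearMap.range L := by rw [heq]; exact hw
  obtain ⟨z, hz⟩ := this
  exact ⟨z, by rw [← hL, hz]⟩

/-- Each `x` with `G x` of trace zero carries `p` points of the curve `z ^ p - z = G(x)`. -/
theorem card_trace_fiber_le (S : Finset E) (G : E[X])
    (hS : ∀ x ∈ S, Algebra.trace (ZMod p) E (G.eval x) = 0) :
    ∃ T : Finset (E × E), (∀ x ∈ T, x.2 ^ p - x.2 = G.eval x.1) ∧ T.card = p * S.card := by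
  classical
  have : CharP E p := charP_of_injective_algebraMap (algebraMap (ZMod p) E).injective p
  choose! z hz using fun x hx => exists_pow_sub_eq (hS x hx)
  refine ⟨(S ×ˢ (Finset.univ : Finset (ZMod p))).image
    fun x => (x.1, z x.1 + algebraMap (ZMod p) E x.2), ?_, ?_⟩
  · rintro ⟨x, y⟩ h
    simp only [Finset.mem_image, Finset.mem_product, Finset.mem_univ, and_true, Prod.mk.injEq,
      Prod.exists] at h
    obtain ⟨x', a, hx, rfl, rfl⟩ := h
    simp only
    rw [add_pow_char, ← map_pow, ZMod.pow_card, add_sub_add_right_eq_sub, hz _ hx]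
  · rw [Finset.card_image_of_injective, Finset.card_product, Finset.card_univ, ZMod.card, mul_comm]
    rintro ⟨x, a⟩ ⟨y, b⟩ h
    simp only [Prod.mk.injEq] at h
    obtain ⟨rfl, h⟩ := h
    simpa using h

end ArtinSchreier

/-- Square-root cancellation over fields of square cardinality, with a constant that depends only
on `p` and the degree. The upper bounds for the number of points of each of the `p` curves
`z ^ p - z = G(x) - w` add up to almost the number of all `x`, so each is nearly attained. -/
theorem exp_sum_bound_sq {p D : ℕ} [Fact p.Prime] (hD : ¬ p ∣ D) : ∃ C : ℝ, ∀ (E : Type) [Field E]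
    [Fintype E] [Algebra (ZMod p) E] (s : ℕ), Fintype.card E = (p ^ s) ^ 2 → ∀ G : E[X],
    G.natDegree = D → ∀ e : AddChar (ZMod p) ℂ, e ≠ 1 →
    ‖∑ x : E, e (Algebra.trace (ZMod p) E (G.eval x))‖ ≤ C * (p : ℝ) ^ s := by
  classical
  have hp : p.Prime := Fact.out
  obtain ⟨C, hC⟩ := card_points_le hp hD
  refine ⟨C, ?_⟩
  intro E _ _ _ s hE G hG e he
  have : CharP E p := charP_of_injective_algebraMap (algebraMap (ZMod p) E).injective p
  let N : ZMod p → ℕ := fun c =>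
    (Finset.univ.filter fun x : E => Algebra.trace (ZMod p) E (G.eval x) = c).card
  have hN : ∀ c, p * N c ≤ (p ^ s) ^ 2 + C * p ^ s := by
    intro c
    obtain ⟨w, hw⟩ := Algebra.trace_surjective (ZMod p) E c
    obtain ⟨T, hT, hcard⟩ := card_trace_fiber_le (p := p)
      (Finset.univ.filter fun x : E => Algebra.trace (ZMod p) E (G.eval x) = c) (G - Polynomial.C w)
      (by
        intro x hx
        simp only [Finset.mem_filter, Finset.mem_univ, true_and] at hx
        rw [eval_sub, eval_C, map_sub, hx, hw, sub_self])
    rw [← hcard]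
    exact hC E s hE (G - Polynomial.C w) (by rw [natDegree_sub_C, hG]) T hT
  have hsum : ∑ c, N c = (p ^ s) ^ 2 := by
    rw [← hE, ← Finset.card_univ]
    exact (Finset.card_eq_sum_card_fiberwise fun x _ => Finset.mem_univ _).symm
  set B : ℝ := (((p : ℝ) ^ s) ^ 2 + C * (p : ℝ) ^ s) / p with hB
  have hp0 : (0 : ℝ) < p := by exact_mod_cast hp.pos
  have hNB : ∀ c, (N c : ℝ) ≤ B := by
    intro c
    rw [hB, le_div_iff₀ hp0, mul_comm]
    exact_mod_cast hN c
  -- Subtracting the constant `B` is free, as the values of a nontrivial character sum to zero.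
  have hS : ∑ x : E, e (Algebra.trace (ZMod p) E (G.eval x)) = ∑ c, ((N c : ℂ) - B) * e c := by
    have h1 : ∑ c, ((N c : ℂ) - B) * e c = ∑ c, (N c : ℂ) * e c := by
      simp only [sub_mul, Finset.sum_sub_distrib]
      rw [← Finset.mul_sum, AddChar.sum_eq_zero_of_ne_one he, mul_zero, sub_zero]
    rw [h1, ← Finset.sum_fiberwise_of_maps_to (s := Finset.univ) (t := Finset.univ)
      (g := fun x : E => Algebra.trace (ZMod p) E (G.eval x)) (fun _ _ => Finset.mem_univ _)]
    refine Finset.sum_congr rfl fun c _ => ?_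
    rw [Finset.sum_congr rfl (g := fun _ => e c), Finset.sum_const, nsmul_eq_mul]
    intro x hx
    rw [(Finset.mem_filter.1 hx).2]
  rw [hS]
  calc ‖∑ c, ((N c : ℂ) - B) * e c‖ ≤ ∑ c, ‖((N c : ℂ) - B) * e c‖ := norm_sum_le _ _
    _ = ∑ c, (B - N c) := by
        refine Finset.sum_congr rfl fun c _ => ?_
        rw [norm_mul, AddChar.norm_apply, mul_one, norm_sub_rev, ← Complex.ofReal_natCast,
          ← Complex.ofReal_sub, Complex.norm_real, Real.norm_of_nonneg (by linarith [hNB c])]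
    _ = C * (p : ℝ) ^ s := by
        rw [Finset.sum_sub_distrib, Finset.sum_const, Finset.card_univ, ZMod.card, nsmul_eq_mul]
        have : (∑ c, (N c : ℝ)) = ((p : ℝ) ^ s) ^ 2 := by exact_mod_cast hsum
        rw [this, hB]
        field_simp
        ring

/-! ### Power sums of the roots of a polynomial -/

section PowerSums

variable {K : Type*} [Field K]

/-- The logarithmic derivative `-X u' / u` of a power series `u`. For `u = ∏ (1 - a X)` this is
`∑ a ^ r X ^ r`, the sum running over `r ≥ 1` and over the `a`. -/
noncomputable def logDer (u : PowerSeries K) : PowerSeries K :=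
  -PowerSeries.X * PowerSeries.derivative K u * u⁻¹

/-- The `r`-th power sum of the roots of a monic polynomial, as a polynomial expression in its
coefficients; for `r = 0` the value is `0`, not the number of roots. -/
noncomputable def ps (h : K[X]) (r : ℕ) : K :=
  PowerSeries.coeff r (logDer (h.reverse : PowerSeries K))

theorem logDer_mul {u v : PowerSeries K} (hu : PowerSeries.constantCoeff u ≠ 0)
    (hv : PowerSeries.constantCoeff v ≠ 0) : logDer (u * v) = logDer u + logDer v := by
  have h1 := PowerSeries.mul_inv_cancel u hu
  have h2 := PowerSeries.mul_inv_cancel v hv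
  simp only [logDer, PowerSeries.mul_inv_rev, Derivation.leibniz, smul_eq_mul]
  linear_combination (-PowerSeries.X * PowerSeries.derivative K v * v⁻¹) * h1 +
    (-PowerSeries.X * PowerSeries.derivative K u * u⁻¹) * h2

theorem logDer_mul_self {u : PowerSeries K} (hu : PowerSeries.constantCoeff u ≠ 0) :
    logDer u * u = -PowerSeries.X * PowerSeries.derivative K u := by
  rw [logDer, mul_assoc, PowerSeries.inv_mul_cancel u hu, mul_one]

theorem constantCoeff_reverse {h : K[X]} (hh : h.Monic) :
    PowerSeries.constantCoeff (h.reverse : PowerSeries K) = 1 := by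
  rw [constantCoeff_coe, coeff_zero_reverse, hh]

theorem constantCoeff_reverse_ne {h : K[X]} (hh : h.Monic) :
    PowerSeries.constantCoeff (h.reverse : PowerSeries K) ≠ 0 := by
  rw [constantCoeff_reverse hh]; exact one_ne_zero

/-- The reason to define power sums through the logarithmic derivative: additivity is clear. -/
theorem ps_mul {f h : K[X]} (hf : f.Monic) (hh : h.Monic) (r : ℕ) :
    ps (f * h) r = ps f r + ps h r := by
  rw [ps, reverse_mul_of_domain, Polynomial.coe_mul,
    logDer_mul (constantCoeff_reverse_ne hf) (constantCoeff_reverse_ne hh), map_add, ps, ps]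

theorem ps_one (r : ℕ) : ps (1 : K[X]) r = 0 := by
  have := ps_mul (K := K) monic_one monic_one r
  rw [mul_one] at this
  simpa using this

theorem ps_zero_right (h : K[X]) : ps h 0 = 0 := by
  simp [ps, logDer]

theorem coeff_reverse_eq {h : K[X]} {n : ℕ} (hn : h.natDegree = n) (r : ℕ) :
    h.reverse.coeff r = if r ≤ n then h.coeff (n - r) else 0 := by
  rw [coeff_reverse, hn]
  split_ifs with hr
  · rw [revAt_le hr]
  · rw [revAt_eq_self_of_lt (by omega), coeff_eq_zero_of_natDegree_lt (by omega)]

/-- Newton's identities. -/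
theorem newton {h : K[X]} (hh : h.Monic) (r : ℕ) :
    ∑ x ∈ Finset.HasAntidiagonal.antidiagonal r, ps h x.1 * h.reverse.coeff x.2 = -(r * h.reverse.coeff r) := by
  have := congrArg (PowerSeries.coeff r) (logDer_mul_self (constantCoeff_reverse_ne hh))
  rw [PowerSeries.coeff_mul] at this
  simp only [coeff_coe] at this
  simp only [ps]
  rw [this]
  cases r with
  | zero => simp
  | succ r =>
    rw [neg_mul, map_neg, PowerSeries.coeff_succ_X_mul, PowerSeries.coeff_derivative, coeff_coe]
    push_cast
    ring

theorem newton' {h : K[X]} (hh : h.Monic) (r : ℕ) :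
    ps h r = -(r * h.reverse.coeff r) -
      ∑ i ∈ Finset.range r, ps h i * h.reverse.coeff (r - i) := by
  have := newton hh r
  rw [Finset.Nat.sum_antidiagonal_eq_sum_range_succ_mk, Finset.sum_range_succ] at this
  simp only [Nat.sub_self, coeff_zero_reverse, hh.leadingCoeff, mul_one] at this
  rw [← this]
  ring

theorem ps_map {L : Type*} [Field L] (φ : K →+* L) {h : K[X]} (hh : h.Monic) (r : ℕ) :
    ps (h.map φ) r = φ (ps h r) := by
  induction r using Nat.strong_induction_on with
  | _ r ih =>
    have hrev : (h.map φ).reverse = h.reverse.map φ := by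
      ext i
      rw [coeff_map, coeff_reverse, coeff_reverse, natDegree_map, coeff_map]
    rw [newton' (hh.map φ), newton' hh, hrev]
    simp only [map_sub, map_neg, map_mul, map_sum, map_natCast, coeff_map]
    congr 1
    refine Finset.sum_congr rfl fun i hi => ?_
    rw [ih i (Finset.mem_range.1 hi)]

theorem ps_X_sub_C (a : K) (r : ℕ) : ps (X - C a) r = if r = 0 then 0 else a ^ r := by
  have hm := monic_X_sub_C a
  have h0 : ∀ j, (X - C a).reverse.coeff j = if j = 0 then 1 else if j = 1 then -a else 0 := by
    intro j
    rw [coeff_reverse_eq (natDegree_X_sub_C a)]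
    rcases j with _ | _ | j <;> simp [coeff_X]
  induction r with
  | zero => simp [ps_zero_right]
  | succ r ih =>
    rw [newton' hm, Finset.sum_range_succ, Finset.sum_eq_zero, zero_add, h0, h0, ih]
    · rcases r with _ | r
      · simp
      · simp [pow_succ]
    · intro i hi
      rw [Finset.mem_range] at hi
      rw [h0, if_neg (by omega), if_neg (by omega), mul_zero]

/-- `ps` is the power sum of the roots, for split monic polynomials. -/
theorem ps_multiset_prod (s : Multiset K) {r : ℕ} (hr : r ≠ 0) :
    ps (s.map fun a => X - C a).prod r = (s.map fun a => a ^ r).sum := by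
  induction s using Multiset.induction_on with
  | empty => simp [ps_one]
  | cons a s ih =>
    rw [Multiset.map_cons, Multiset.prod_cons, Multiset.map_cons, Multiset.sum_cons,
      ps_mul (monic_X_sub_C a) (monic_multiset_prod_of_monic _ _ fun a _ => monic_X_sub_C a), ih,
      ps_X_sub_C, if_neg hr]

/-- Power sums up to `k` determine the leading coefficients when `k` is below the characteristic. -/
theorem reverse_coeff_eq_of_ps_eq {p : ℕ} [CharP K p] {f h : K[X]} (hf : f.Monic) (hh : h.Monic)
    {k : ℕ} (hk : k < p) (hps : ∀ i, 1 ≤ i → i ≤ k → ps f i = ps h i) :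
    ∀ i ≤ k, f.reverse.coeff i = h.reverse.coeff i := by
  intro i
  induction i using Nat.strong_induction_on with
  | _ i ih =>
    intro hi
    rcases Nat.eq_zero_or_pos i with rfl | hpos
    · rw [coeff_zero_reverse, coeff_zero_reverse, hf, hh]
    have h1 := newton' hf i
    have h2 := newton' hh i
    have h3 : ∑ j ∈ Finset.range i, ps f j * f.reverse.coeff (i - j) =
        ∑ j ∈ Finset.range i, ps h j * h.reverse.coeff (i - j) := by
      refine Finset.sum_congr rfl fun j hj => ?_
      rw [Finset.mem_range] at hj
      rcases Nat.eq_zero_or_pos j with rfl | hj0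
      · rw [ps_zero_right, ps_zero_right, zero_mul, zero_mul]
      · rw [hps j hj0 (by omega), ih (i - j) (by omega) (by omega)]
    rw [hps i hpos hi, h2, h3] at h1
    have hne : (i : K) ≠ 0 := by
      rw [Ne, CharP.cast_eq_zero_iff K p]
      exact fun hdvd => absurd (Nat.le_of_dvd hpos hdvd) (by omega)
    have h4 : (i : K) * f.reverse.coeff i = i * h.reverse.coeff i := by linear_combination h1
    exact mul_left_cancel₀ hne h4

/-- Changing the coefficient at distance `D` from the top. -/
theorem ps_add_shift {h : K[X]} (hh : h.Monic) {j D : ℕ} (hj : h.natDegree = j) (hD : 1 ≤ D)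
    (hDj : D ≤ j) (t : K) {r : ℕ} (hr : r ≤ D) :
    ps (h + C t * X ^ (j - D)) r = ps h r - if r = D then D * t else 0 := by
  have hdeg : (C t * X ^ (j - D)).degree < h.degree := by
    rw [degree_eq_natDegree hh.ne_zero, hj]
    refine (degree_C_mul_X_pow_le _ _).trans_lt ?_
    exact_mod_cast (by omega : j - D < j)
  have hm : (h + C t * X ^ (j - D)).Monic := hh.add_of_left hdeg
  have hn : (h + C t * X ^ (j - D)).natDegree = j := by
    rw [← hj]; exact natDegree_eq_of_degree_eq (degree_add_eq_left_of_degree_lt (by rwa [hj]))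
  have hc : ∀ i ≤ D, (h + C t * X ^ (j - D)).reverse.coeff i =
      h.reverse.coeff i + if i = D then t else 0 := by
    intro i hi
    rw [coeff_reverse_eq hn, coeff_reverse_eq hj, if_pos (by omega), if_pos (by omega), coeff_add,
      coeff_C_mul, coeff_X_pow]
    congr 1
    by_cases hiD : i = D
    · simp [hiD]
    · rw [if_neg (by omega), if_neg hiD, mul_zero]
  induction r using Nat.strong_induction_on with
  | _ r ih =>
    have h3 : ∑ i ∈ Finset.range r, ps (h + C t * X ^ (j - D)) i *
        (h + C t * X ^ (j - D)).reverse.coeff (r - i) =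
        ∑ i ∈ Finset.range r, ps h i * h.reverse.coeff (r - i) := by
      refine Finset.sum_congr rfl fun i hi => ?_
      rw [Finset.mem_range] at hi
      rcases Nat.eq_zero_or_pos i with rfl | hi0
      · rw [ps_zero_right, ps_zero_right, zero_mul, zero_mul]
      · rw [ih i hi (by omega), if_neg (by omega), sub_zero, hc _ (by omega), if_neg (by omega),
          add_zero]
    rw [newton' hm, newton' hh, h3, hc r hr]
    by_cases hrD : r = D
    · subst hrD; simp; ring
    · simp [hrD]

end PowerSums

/-! ### The L-function of an additive character -/

section Chi

/-- The completely multiplicative function on monic polynomials whose value at `∏ (X - a)` is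
`∏ ψ (g a)`, at least if `g` has no constant term. -/
noncomputable def chi {F : Type} [Field F] (ψ : AddChar F ℂ) (g h : F[X]) : ℂ :=
  ψ (∑ r ∈ Finset.range (g.natDegree + 1), g.coeff r * ps h r)

variable {F : Type} [Field F] (ψ : AddChar F ℂ) (g : F[X])

theorem chi_mul {f h : F[X]} (hf : f.Monic) (hh : h.Monic) :
    chi ψ g (f * h) = chi ψ g f * chi ψ g h := by
  simp only [chi, ps_mul hf hh, mul_add, Finset.sum_add_distrib, AddChar.map_add_eq_mul]

theorem chi_one : chi ψ g 1 = 1 := by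
  simp [chi, ps_one]

theorem chi_pow {f : F[X]} (hf : f.Monic) (j : ℕ) : chi ψ g (f ^ j) = chi ψ g f ^ j := by
  induction j with
  | zero => simp [chi_one]
  | succ j ih => rw [pow_succ, chi_mul ψ g (hf.pow j) hf, ih, pow_succ]

end Chi

section LFunction

variable {F : Type} [Field F] [Fintype F]

theorem finite_monics (F : Type) [Field F] [Fintype F] (j : ℕ) :
    {h : F[X] | h.Monic ∧ h.natDegree ≤ j}.Finite := by
  refine Set.Finite.of_finite_image (f := fun h : F[X] => fun i : Fin (j + 1) => h.coeff i)
    (Set.toFinite _) ?_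
  rintro f ⟨-, hf⟩ h ⟨-, hh⟩ hfh
  ext i
  by_cases hi : i ≤ j
  · exact congrFun hfh ⟨i, by omega⟩
  · rw [coeff_eq_zero_of_natDegree_lt (by omega), coeff_eq_zero_of_natDegree_lt (by omega)]

/-- The monic polynomials of degree `j`. -/
noncomputable def monics (F : Type) [Field F] [Fintype F] (j : ℕ) : Finset F[X] :=
  ((finite_monics F j).subset (t := {h : F[X] | h.Monic ∧ h.natDegree = j})
    fun _ h => ⟨h.1, h.2.le⟩).toFinset

@[simp] theorem mem_monics {j : ℕ} {h : F[X]} : h ∈ monics F j ↔ h.Monic ∧ h.natDegree = j := by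
  simp [monics]

/-- The monic irreducible polynomials of degree at most `j`. -/
noncomputable def irrs (F : Type) [Field F] [Fintype F] (j : ℕ) : Finset F[X] :=
  ((finite_monics F j).subset (t := {h : F[X] | h.Monic ∧ h.natDegree ≤ j ∧ Irreducible h})
    fun _ h => ⟨h.1, h.2.1⟩).toFinset

@[simp] theorem mem_irrs {j : ℕ} {h : F[X]} :
    h ∈ irrs F j ↔ h.Monic ∧ h.natDegree ≤ j ∧ Irreducible h := by
  simp [irrs]

variable (ψ : AddChar F ℂ) (g : F[X])

/-- The coefficients of the L-function of `chi`. -/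
noncomputable def lcoeff (j : ℕ) : ℂ := ∑ h ∈ monics F j, chi ψ g h

/-- The coefficients of the logarithmic derivative of the L-function of `chi`. -/
noncomputable def primeSum (ν : ℕ) : ℂ :=
  ∑ P ∈ (irrs F ν).filter fun P => P.natDegree ∣ ν, P.natDegree * chi ψ g P ^ (ν / P.natDegree)

theorem lcoeff_zero : lcoeff ψ g 0 = 1 := by
  have : monics F 0 = {1} := by
    ext h
    rw [mem_monics, Finset.mem_singleton]
    constructor
    · rintro ⟨h1, h2⟩
      exact h1.natDegree_eq_zero.1 h2
    · rintro rfl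
      simp
  rw [lcoeff, this, Finset.sum_singleton, chi_one]

/-- The L-function is a polynomial: changing the coefficient at distance `g.natDegree` from the top
runs through all values of `ψ`. -/
theorem lcoeff_eq_zero {ψ : AddChar F ℂ} (hψ : ψ ≠ 1) (hg : (g.natDegree : F) ≠ 0) {j : ℕ}
    (hj : g.natDegree ≤ j) : lcoeff ψ g j = 0 := by
  set D := g.natDegree with hD
  have hD1 : 1 ≤ D := by
    rcases Nat.eq_zero_or_pos D with h | h
    · simp [h] at hg
    · exact h
  have hlc : g.coeff D ≠ 0 := by
    rw [hD]
    intro h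
    rw [coeff_natDegree, leadingCoeff_eq_zero] at h
    rw [h, natDegree_zero] at hD
    omega
  obtain ⟨a, ha⟩ := AddChar.ne_one_iff.1 hψ
  -- The shift of the coefficient that multiplies `chi` by `ψ a`, a value different from `1`.
  set t : F := -(a / (g.coeff D * D)) with ht
  have hshift : ∀ t : F, ∀ h ∈ monics F j, h + C t * X ^ (j - D) ∈ monics F j := by
    intro t h hh
    rw [mem_monics] at hh ⊢
    have hdeg : (C t * X ^ (j - D)).degree < h.degree := by
      rw [degree_eq_natDegree hh.1.ne_zero, hh.2]
      refine (degree_C_mul_X_pow_le _ _).trans_lt ?_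
      exact_mod_cast (by omega : j - D < j)
    refine ⟨hh.1.add_of_left hdeg, ?_⟩
    rw [← hh.2, hh.2]
    rw [natDegree_eq_of_degree_eq (degree_add_eq_left_of_degree_lt hdeg), hh.2]
  have hchi : ∀ h ∈ monics F j, chi ψ g (h + C t * X ^ (j - D)) = ψ a * chi ψ g h := by
    intro h hh
    rw [mem_monics] at hh
    rw [chi, chi, ← AddChar.map_add_eq_mul, ← hD]
    congr 1
    have hr : ∀ r ∈ Finset.range (D + 1), g.coeff r * ps (h + C t * X ^ (j - D)) r =
        g.coeff r * ps h r + if r = D then a else 0 := by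
      intro r hr
      rw [Finset.mem_range] at hr
      rw [ps_add_shift hh.1 hh.2 hD1 hj t (by omega)]
      split_ifs with h
      · subst h
        rw [ht]
        field_simp
        ring
      · ring
    rw [Finset.sum_congr rfl hr, Finset.sum_add_distrib, Finset.sum_ite_eq', if_pos (by simp),
      add_comm]
  have h1 : ∑ h ∈ monics F j, chi ψ g (h + C t * X ^ (j - D)) = lcoeff ψ g j :=
    Finset.sum_nbij' (fun h => h + C t * X ^ (j - D)) (fun h => h + C (-t) * X ^ (j - D))
      (hshift t) (hshift (-t)) (fun h _ => by simp) (fun h _ => by simp)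
      (fun h _ => rfl)
  rw [Finset.sum_congr rfl hchi, ← Finset.mul_sum] at h1
  change ψ a * lcoeff ψ g j = lcoeff ψ g j at h1
  have h2 : (ψ a - 1) * lcoeff ψ g j = 0 := by linear_combination h1
  exact (mul_eq_zero.1 h2).resolve_left (sub_ne_zero.2 ha)

/-- The degree of a monic polynomial, counted over the prime powers that divide it. -/
theorem natDegree_eq_sum {n : ℕ} {h : F[X]} (hh : h ∈ monics F n) :
    (n : ℂ) = ∑ P ∈ irrs F n, ∑ j ∈ Finset.Icc 1 n,
      Set.indicator {f : F[X] | P ^ j ∣ f} (fun _ => (P.natDegree : ℂ)) h := by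
  classical
  obtain ⟨hm, hn⟩ := mem_monics.1 hh
  have h0 := hm.ne_zero
  set s := UniqueFactorizationMonoid.normalizedFactors h with hs
  have hP : ∀ P ∈ s, P.Monic ∧ Irreducible P ∧ P ∣ h := by
    intro P hP
    have hirr := UniqueFactorizationMonoid.irreducible_of_normalized_factor P hP
    refine ⟨?_, hirr, UniqueFactorizationMonoid.dvd_of_mem_normalizedFactors hP⟩
    rw [← UniqueFactorizationMonoid.normalize_normalized_factor P hP]
    exact monic_normalize hirr.ne_zero
  have hprod : s.prod = h := by
    have := UniqueFactorizationMonoid.prod_normalizedFactors_eq h0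
    rw [hm.normalize_eq_self] at this
    exact this
  have hcount : ∀ P ∈ irrs F n, ∑ j ∈ Finset.Icc 1 n,
      Set.indicator {f : F[X] | P ^ j ∣ f} (fun _ => (P.natDegree : ℂ)) h =
      s.count P * P.natDegree := by
    intro P hP
    obtain ⟨hPm, hPn, hPi⟩ := mem_irrs.1 hP
    have hdvd : ∀ j, P ^ j ∣ h ↔ j ≤ s.count P := by
      intro j
      rw [pow_dvd_iff_le_emultiplicity,
        UniqueFactorizationMonoid.emultiplicity_eq_count_normalizedFactors hPi h0,
        hPm.normalize_eq_self, Nat.cast_le]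
    have hle : s.count P ≤ n := by
      have h1 := natDegree_le_of_dvd ((hdvd _).2 le_rfl) h0
      rw [natDegree_pow, hn] at h1
      exact le_trans (Nat.le_mul_of_pos_right _ hPi.natDegree_pos) h1
    simp only [Set.indicator_apply, Set.mem_ofPred_eq, hdvd]
    rw [← Finset.sum_filter, Finset.sum_const, nsmul_eq_mul]
    congr 2
    have : (Finset.Icc 1 n).filter (fun j => j ≤ s.count P) = Finset.Icc 1 (s.count P) := by
      ext j
      simp only [Finset.mem_filter, Finset.mem_Icc]
      omega
    rw [this, Nat.card_Icc, Nat.add_sub_cancel]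
  rw [Finset.sum_congr rfl hcount]
  have hsub : s.toFinset ⊆ irrs F n := by
    intro P hPs
    obtain ⟨h1, h2, h3⟩ := hP P (Multiset.mem_toFinset.1 hPs)
    rw [mem_irrs]
    refine ⟨h1, ?_, h2⟩
    rw [← hn]
    exact natDegree_le_of_dvd h3 h0
  rw [← Finset.sum_subset hsub]
  · have h4 : h.natDegree = (s.map natDegree).sum := by
      conv_lhs => rw [← hprod]
      exact natDegree_multiset_prod_of_monic _ fun P h => (hP P h).1
    rw [← hn, h4, Finset.sum_multiset_map_count]
    push_cast
    simp
  · intro P _ hPs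
    rw [Multiset.mem_toFinset, ← Multiset.count_eq_zero] at hPs
    simp [hPs]

theorem sum_dvd {n j : ℕ} {P : F[X]} (hP : P.Monic) :
    ∑ h ∈ monics F n, Set.indicator {f : F[X] | P ^ j ∣ f} (fun _ => (1 : ℂ)) h * chi ψ g h =
      if j * P.natDegree ≤ n then chi ψ g P ^ j * lcoeff ψ g (n - j * P.natDegree) else 0 := by
  classical
  simp only [Set.indicator_apply, Set.mem_ofPred_eq, ite_mul, one_mul, zero_mul]
  rw [← Finset.sum_filter]
  have hPj := hP.pow j
  split_ifs with h
  · rw [lcoeff, Finset.mul_sum]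
    refine (Finset.sum_nbij (fun f => P ^ j * f) ?_ ?_ ?_ ?_).symm
    · intro f hf
      rw [mem_monics] at hf
      rw [Finset.mem_filter, mem_monics]
      refine ⟨⟨hPj.mul hf.1, ?_⟩, dvd_mul_right _ _⟩
      rw [hPj.natDegree_mul hf.1, hP.natDegree_pow, hf.2]
      omega
    · intro f _ f' _ hff
      exact mul_left_cancel₀ hPj.ne_zero hff
    · rintro f hf
      rw [Finset.mem_coe, Finset.mem_filter, mem_monics] at hf
      obtain ⟨⟨h1, h2⟩, f', rfl⟩ := hf
      have h3 := hPj.of_mul_monic_left h1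
      refine ⟨f', ?_, rfl⟩
      rw [Finset.mem_coe, mem_monics]
      refine ⟨h3, ?_⟩
      rw [hPj.natDegree_mul h3, hP.natDegree_pow] at h2
      omega
    · intro f hf
      rw [chi_mul ψ g hPj (mem_monics.1 hf).1, chi_pow ψ g hP]
  · rw [Finset.filter_eq_empty_iff.2, Finset.sum_empty]
    intro f hf hdvd
    rw [mem_monics] at hf
    have := natDegree_le_of_dvd hdvd hf.1.ne_zero
    rw [hP.natDegree_pow] at this
    omega

theorem primeSum_eq {n ν : ℕ} (h1 : 1 ≤ ν) (hν : ν ≤ n) :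
    primeSum ψ g ν = ∑ P ∈ irrs F n, ∑ j ∈ Finset.Icc 1 n,
      if ν = j * P.natDegree then P.natDegree * chi ψ g P ^ j else 0 := by
  have hPsum : ∀ P ∈ irrs F n, (∑ j ∈ Finset.Icc 1 n,
      if ν = j * P.natDegree then P.natDegree * chi ψ g P ^ j else 0) =
      if P.natDegree ∣ ν then P.natDegree * chi ψ g P ^ (ν / P.natDegree) else 0 := by
    intro P hP
    have hpos := (mem_irrs.1 hP).2.2.natDegree_pos
    split_ifs with h
    · obtain ⟨j, rfl⟩ := h
      rw [Nat.mul_div_cancel_left _ hpos, Finset.sum_eq_single j]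
      · rw [if_pos (mul_comm _ _)]
      · intro i _ hij
        rw [if_neg]
        rw [mul_comm]
        exact fun h => hij (Nat.eq_of_mul_eq_mul_right hpos h).symm
      · intro hj
        refine absurd ?_ hj
        rw [Finset.mem_Icc]
        constructor
        · exact Nat.pos_of_ne_zero fun h => by simp [h] at h1
        · exact (Nat.le_mul_of_pos_left _ hpos).trans hν
    · refine Finset.sum_eq_zero fun j _ => if_neg fun hj => h ⟨j, by rw [hj, mul_comm]⟩
  rw [Finset.sum_congr rfl hPsum, ← Finset.sum_filter, primeSum]
  refine Finset.sum_congr ?_ fun _ _ => rfl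
  ext P
  simp only [Finset.mem_filter, mem_irrs]
  constructor
  · rintro ⟨⟨a, b, c⟩, d⟩
    exact ⟨⟨a, b.trans hν, c⟩, d⟩
  · rintro ⟨⟨a, b, c⟩, d⟩
    exact ⟨⟨a, Nat.le_of_dvd h1 d, c⟩, d⟩

/-- The logarithmic derivative of the Euler product. -/
theorem lcoeff_newton (n : ℕ) :
    (n : ℂ) * lcoeff ψ g n = ∑ ν ∈ Finset.Icc 1 n, primeSum ψ g ν * lcoeff ψ g (n - ν) := by
  have hR : ∑ ν ∈ Finset.Icc 1 n, primeSum ψ g ν * lcoeff ψ g (n - ν) =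
      ∑ P ∈ irrs F n, ∑ j ∈ Finset.Icc 1 n, if j * P.natDegree ≤ n then
        P.natDegree * chi ψ g P ^ j * lcoeff ψ g (n - j * P.natDegree) else 0 := by
    have : ∀ ν ∈ Finset.Icc 1 n, primeSum ψ g ν * lcoeff ψ g (n - ν) =
        ∑ P ∈ irrs F n, ∑ j ∈ Finset.Icc 1 n, if ν = j * P.natDegree then
          P.natDegree * chi ψ g P ^ j * lcoeff ψ g (n - ν) else 0 := by
      intro ν hν
      rw [Finset.mem_Icc] at hν
      rw [primeSum_eq ψ g hν.1 hν.2, Finset.sum_mul]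
      refine Finset.sum_congr rfl fun P _ => ?_
      rw [Finset.sum_mul]
      exact Finset.sum_congr rfl fun j _ => by rw [ite_mul, zero_mul]
    rw [Finset.sum_congr rfl this, Finset.sum_comm]
    refine Finset.sum_congr rfl fun P hP => ?_
    rw [Finset.sum_comm]
    refine Finset.sum_congr rfl fun j hj => ?_
    rw [Finset.sum_ite_eq']
    have hpos := (mem_irrs.1 hP).2.2.natDegree_pos
    rw [Finset.mem_Icc] at hj
    have := Nat.mul_pos hj.1 hpos
    simp only [Finset.mem_Icc]
    by_cases h : j * P.natDegree ≤ n
    · rw [if_pos h, if_pos ⟨this, h⟩]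
    · rw [if_neg h, if_neg fun h' => h h'.2]
  rw [hR, lcoeff, Finset.mul_sum]
  have hL : ∀ h ∈ monics F n, (n : ℂ) * chi ψ g h = ∑ P ∈ irrs F n, ∑ j ∈ Finset.Icc 1 n,
      P.natDegree * (Set.indicator {f : F[X] | P ^ j ∣ f} (fun _ => (1 : ℂ)) h * chi ψ g h) := by
    intro h hh
    conv_lhs => rw [natDegree_eq_sum hh]
    rw [Finset.sum_mul]
    refine Finset.sum_congr rfl fun P _ => ?_
    rw [Finset.sum_mul]
    refine Finset.sum_congr rfl fun j _ => ?_
    simp only [Set.indicator]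
    split_ifs <;> simp
  rw [Finset.sum_congr rfl hL, Finset.sum_comm]
  refine Finset.sum_congr rfl fun P hP => ?_
  rw [Finset.sum_comm]
  refine Finset.sum_congr rfl fun j _ => ?_
  rw [← Finset.mul_sum, sum_dvd ψ g (mem_irrs.1 hP).1]
  split_ifs
  · ring
  · ring

end LFunction

/-! ### Traces and sums over extension fields -/

section TraceSums

variable {F : Type} [Field F] [Fintype F] {E : Type} [Field E] [Fintype E] [Algebra F E]

/-- The sum of the `r`-th powers of the conjugates of `x` over `F`, each counted `[E : F(x)]`
times. -/
theorem trace_pow_eq_ps (x : E) {r : ℕ} (hr : r ≠ 0) :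
    Algebra.trace F E (x ^ r) =
      (Module.finrank F E / (minpoly F x).natDegree : ℕ) * ps (minpoly F x) r := by
  classical
  have hx : IsIntegral F x := .of_finite F x
  let K := IntermediateField.adjoin F {x}
  let pb := IntermediateField.adjoin.powerBasis hx
  have hgen : pb.gen = IntermediateField.AdjoinSimple.gen F x :=
    IntermediateField.adjoin.powerBasis_gen hx
  have hmin : minpoly F pb.gen = minpoly F x := by
    rw [hgen, IntermediateField.minpoly_gen]
  have h1 : Algebra.trace F E (x ^ r) = Module.finrank K E • Algebra.trace F K (pb.gen ^ r) := by
    rw [← Algebra.trace_trace (S := K)]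
    have : x ^ r = algebraMap K E (pb.gen ^ r) := by
      rw [map_pow, hgen, IntermediateField.AdjoinSimple.algebraMap_gen]
    rw [this, Algebra.trace_algebraMap, map_nsmul]
  have hdeg : Module.finrank F K = (minpoly F x).natDegree :=
    IntermediateField.adjoin.finrank hx
  have hpos : 0 < (minpoly F x).natDegree := minpoly.natDegree_pos hx
  have h2 : Module.finrank K E = Module.finrank F E / (minpoly F x).natDegree := by
    rw [← Module.finrank_mul_finrank F K E, hdeg, Nat.mul_div_cancel_left _ hpos]
  have h3 : Algebra.trace F K (pb.gen ^ r) = ps (minpoly F x) r := by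
    apply (algebraMap F (AlgebraicClosure F)).injective
    have hsplit : ((minpoly F x).map (algebraMap F (AlgebraicClosure F))).Splits :=
      IsAlgClosed.splits _
    have hsep : (minpoly F x).Separable :=
      PerfectField.separable_of_irreducible (minpoly.irreducible hx)
    rw [← ps_map _ (minpoly.monic hx), trace_eq_sum_embeddings (AlgebraicClosure F)]
    have hfac := hsplit.eq_prod_roots
    rw [((minpoly.monic hx).map _).leadingCoeff, C_1, one_mul] at hfac
    rw [hfac, ps_multiset_prod _ hr]
    have hnodup : ((minpoly F x).map (algebraMap F (AlgebraicClosure F))).roots.Nodup :=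
      nodup_roots ((separable_map _).mpr hsep)
    rw [Fintype.sum_equiv pb.liftEquiv' (fun σ : K →ₐ[F] AlgebraicClosure F => σ (pb.gen ^ r))
      (fun a => (a : AlgebraicClosure F) ^ r) (fun σ => by simp),
      Finset.sum_mem_multiset _ _ (fun a : AlgebraicClosure F => a ^ r) (fun _ => rfl), hmin,
      Finset.sum_eq_multiset_sum, Multiset.toFinset_val, Multiset.dedup_eq_self.mpr hnodup]
  rw [h1, h2, h3, nsmul_eq_mul]

/-- Grouping the elements of `E` by minimal polynomial, the character sum over `E` is a coefficient
of the logarithmic derivative of the L-function. -/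
theorem primeSum_eq_sum (ψ : AddChar F ℂ) {g : F[X]} (hg : g.coeff 0 = 0) :
    primeSum ψ g (Module.finrank F E) = ∑ x : E, ψ (Algebra.trace F E (aeval x g)) := by
  classical
  set ν := Module.finrank F E with hν
  have hν0 : 0 < ν := Module.finrank_pos
  have hterm : ∀ x : E, ψ (Algebra.trace F E (aeval x g)) =
      chi ψ g (minpoly F x) ^ (ν / (minpoly F x).natDegree) := by
    intro x
    rw [chi, ← AddChar.map_nsmul_eq_pow]
    congr 1
    rw [aeval_eq_sum_range, map_sum, Finset.smul_sum]
    refine Finset.sum_congr rfl fun r _ => ?_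
    rw [map_smul, smul_eq_mul]
    rcases Nat.eq_zero_or_pos r with rfl | hr
    · simp [hg]
    · rw [trace_pow_eq_ps x hr.ne', nsmul_eq_mul]
      ring
  simp only [hterm]
  have hmaps : ∀ x ∈ (Finset.univ : Finset E), minpoly F x ∈
      (irrs F ν).filter fun P => P.natDegree ∣ ν := by
    intro x _
    have hx : IsIntegral F x := .of_finite F x
    rw [Finset.mem_filter, mem_irrs]
    exact ⟨⟨minpoly.monic hx, minpoly.natDegree_le x, minpoly.irreducible hx⟩,
      minpoly.degree_dvd hx⟩
  rw [← Finset.sum_fiberwise_of_maps_to hmaps, primeSum]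
  refine Finset.sum_congr rfl fun P hP => ?_
  rw [Finset.mem_filter, mem_irrs] at hP
  obtain ⟨⟨hPm, -, hPi⟩, hdvd⟩ := hP
  rw [Finset.sum_congr rfl (g := fun _ => chi ψ g P ^ (ν / P.natDegree)), Finset.sum_const,
    nsmul_eq_mul]
  · congr 2
    have hsep : P.Separable := PerfectField.separable_of_irreducible hPi
    have hsplit : (P.map (algebraMap F E)).Splits := by
      have h1 := (hPi.natDegree_dvd_iff_dvd_X_pow_card_pow_sub_X).1 hdvd
      have hcard : Nat.card F ^ ν = Fintype.card E := by
        rw [← Nat.card_eq_fintype_card (α := E), Module.natCard_eq_pow_finrank (K := F) (V := E)]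
      rw [hcard] at h1
      have h2 := Polynomial.map_dvd (algebraMap F E) h1
      rw [Polynomial.map_sub, Polynomial.map_pow, map_X] at h2
      refine Splits.of_dvd ?_ (FiniteField.X_pow_card_sub_X_ne_zero E Fintype.one_lt_card) h2
      rw [splits_iff_card_roots, FiniteField.roots_X_pow_card_sub_X,
        FiniteField.X_pow_card_sub_X_natDegree_eq E Fintype.one_lt_card]
      rfl
    have hroots : (Finset.univ.filter fun x : E => minpoly F x = P) =
        (P.map (algebraMap F E)).roots.toFinset := by
      ext x
      rw [Finset.mem_filter, Multiset.mem_toFinset, mem_roots (hPm.map _).ne_zero, IsRoot.def,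
        eval_map_algebraMap]
      constructor
      · rintro ⟨-, rfl⟩
        exact minpoly.aeval F x
      · intro h
        exact ⟨Finset.mem_univ _, (minpoly.eq_of_irreducible_of_monic hPi h hPm).symm⟩
    rw [hroots, Multiset.toFinset_card_of_nodup (nodup_roots ((separable_map _).mpr hsep)),
      ← hsplit.natDegree_eq_card_roots, natDegree_map]
  · intro x hx
    rw [(Finset.mem_filter.1 hx).2]

end TraceSums

/-! ### Absolute values of the reciprocal roots -/

/-- Power sums that grow at most like `R ^ μ` come from numbers of absolute value at most `R`:
a fixed linear combination of consecutive power sums isolates a single number. -/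
theorem norm_le_of_power_sums {s : Multiset ℂ} {C R : ℝ} (hR : 0 < R)
    (hs : ∀ μ : ℕ, 1 ≤ μ → ‖(s.map fun z => z ^ μ).sum‖ ≤ C * R ^ μ) {z : ℂ} (hz : z ∈ s) :
    ‖z‖ ≤ R := by
  classical
  by_contra hlt
  push Not at hlt
  -- `l` vanishes at all the numbers except `z`; its coefficients give the linear combination.
  set l : ℂ[X] := ∏ w ∈ s.toFinset.erase z, (X - Polynomial.C w) with hl
  have hl0 : ∀ y ∈ s, y ≠ z → l.eval y = 0 := by
    intro y hy hyz
    rw [hl, eval_prod]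
    exact Finset.prod_eq_zero (Finset.mem_erase.2 ⟨hyz, Multiset.mem_toFinset.2 hy⟩) (by simp)
  have hlz : l.eval z ≠ 0 := by
    rw [hl, eval_prod, Finset.prod_ne_zero_iff]
    intro w hw
    simpa [sub_eq_zero] using (Finset.ne_of_mem_erase hw).symm
  have hkey : ∀ μ : ℕ, (s.count z : ℂ) * z ^ μ * l.eval z =
      ∑ t ∈ Finset.range (l.natDegree + 1), l.coeff t * (s.map fun y => y ^ (μ + t)).sum := by
    intro μ
    have h1 : (s.map fun y => y ^ μ * l.eval y).sum = s.count z * z ^ μ * l.eval z := by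
      rw [Finset.sum_multiset_map_count, Finset.sum_eq_single z]
      · rw [nsmul_eq_mul, mul_assoc]
      · intro y hy hyz
        rw [hl0 y (Multiset.mem_toFinset.1 hy) hyz, mul_zero, smul_zero]
      · intro h
        exact absurd (Multiset.mem_toFinset.2 hz) h
    rw [← h1]
    simp only [eval_eq_sum_range, Finset.mul_sum]
    have hswap : ∀ u : Multiset ℂ,
        (u.map fun x => ∑ i ∈ Finset.range (l.natDegree + 1), x ^ μ * (l.coeff i * x ^ i)).sum =
        ∑ i ∈ Finset.range (l.natDegree + 1),
          (u.map fun x => x ^ μ * (l.coeff i * x ^ i)).sum := by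
      intro u
      induction u using Multiset.induction_on with
      | empty => simp
      | cons a u ih => simp only [Multiset.map_cons, Multiset.sum_cons, ih, Finset.sum_add_distrib]
    rw [hswap]
    refine Finset.sum_congr rfl fun t _ => ?_
    rw [← Multiset.sum_map_mul_left]
    refine congrArg Multiset.sum (Multiset.map_congr rfl fun y _ => ?_)
    rw [pow_add]
    ring
  set C' : ℝ := ∑ t ∈ Finset.range (l.natDegree + 1), ‖l.coeff t‖ * (C * R ^ t) with hC'
  have hbound : ∀ μ : ℕ, 1 ≤ μ → ‖z‖ ^ μ * ‖l.eval z‖ ≤ C' * R ^ μ := by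
    intro μ hμ
    have hc : (1 : ℝ) ≤ s.count z := by exact_mod_cast Multiset.count_pos.2 hz
    calc ‖z‖ ^ μ * ‖l.eval z‖ ≤ s.count z * (‖z‖ ^ μ * ‖l.eval z‖) :=
          le_mul_of_one_le_left (by positivity) hc
      _ = ‖(s.count z : ℂ) * z ^ μ * l.eval z‖ := by
          rw [norm_mul, norm_mul, norm_pow, Complex.norm_natCast, mul_assoc]
      _ ≤ ∑ t ∈ Finset.range (l.natDegree + 1),
          ‖l.coeff t * (s.map fun y => y ^ (μ + t)).sum‖ := by
          rw [hkey]; exact norm_sum_le _ _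
      _ ≤ ∑ t ∈ Finset.range (l.natDegree + 1), ‖l.coeff t‖ * (C * R ^ t) * R ^ μ := by
          refine Finset.sum_le_sum fun t _ => ?_
          rw [norm_mul, mul_assoc]
          refine mul_le_mul_of_nonneg_left ?_ (norm_nonneg _)
          refine (hs (μ + t) (by omega)).trans_eq ?_
          rw [pow_add]; ring
      _ = C' * R ^ μ := by rw [hC', Finset.sum_mul]
  have hl1 : 0 < ‖l.eval z‖ := norm_pos_iff.2 hlz
  obtain ⟨m, hm⟩ := pow_unbounded_of_one_lt (C' / ‖l.eval z‖) ((one_lt_div hR).2 hlt)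
  have h1 : (1 : ℝ) < ‖z‖ / R := (one_lt_div hR).2 hlt
  have h2 : C' / ‖l.eval z‖ < (‖z‖ / R) ^ (m + 1) :=
    hm.trans (pow_lt_pow_right₀ h1 (Nat.lt_succ_self m))
  rw [div_pow, div_lt_div_iff₀ hl1 (by positivity)] at h2
  exact absurd (hbound (m + 1) (by omega)) (not_le.2 h2)

/-- If the sums `S ν` come from a polynomial L-function of degree less than `D` and are `O(B ^ ν)`
for even `ν`, then its reciprocal roots have absolute value at most `B`. -/
theorem norm_sum_le_of_newton {D : ℕ} (hD : 1 ≤ D) {A S : ℕ → ℂ} (hA0 : A 0 = 1)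
    (hA : ∀ j, D ≤ j → A j = 0)
    (hN : ∀ n : ℕ, (n : ℂ) * A n = ∑ ν ∈ Finset.Icc 1 n, S ν * A (n - ν))
    {B C : ℝ} (hB : 0 < B) (hS : ∀ ν, 1 ≤ ν → ‖S (2 * ν)‖ ≤ C * B ^ (2 * ν)) {ν : ℕ} (hν : 1 ≤ ν) :
    ‖S ν‖ ≤ (D - 1 : ℕ) * B ^ ν := by
  obtain ⟨d, rfl⟩ : ∃ d, D = d + 1 := ⟨D - 1, by omega⟩
  rw [Nat.add_sub_cancel]
  -- The reciprocal polynomial of the L-function. By Newton's identities its power sums are `-S ν`.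
  set f : ℂ[X] := ∑ j ∈ Finset.range (d + 1), Polynomial.C (A j) * X ^ (d - j) with hf
  have hcoeff : ∀ i ≤ d, f.coeff (d - i) = A i := by
    intro i hi
    rw [hf, finsetSum_coeff, Finset.sum_eq_single i]
    · simp
    · intro j hj hji
      rw [Finset.mem_range] at hj
      rw [coeff_C_mul, coeff_X_pow, if_neg (by omega), mul_zero]
    · intro h
      rw [Finset.mem_range] at h
      omega
  have hle : f.natDegree ≤ d := by
    refine natDegree_sum_le_of_forall_le _ _ fun j _ => ?_
    exact (natDegree_C_mul_X_pow_le _ _).trans (Nat.sub_le _ _)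
  have hm : f.Monic := monic_of_natDegree_le_of_coeff_eq_one d hle (by
    have := hcoeff 0 (by omega)
    rwa [hA0] at this)
  have hdeg : f.natDegree = d := by
    refine le_antisymm hle (le_natDegree_of_ne_zero ?_)
    have := hcoeff 0 (by omega)
    rw [Nat.sub_zero, hA0] at this
    rw [this]
    exact one_ne_zero
  have hrev : ∀ j, f.reverse.coeff j = A j := by
    intro j
    rw [coeff_reverse_eq hdeg]
    split_ifs with h
    · exact hcoeff j h
    · rw [hA j (by omega)]
  have hps : ∀ r, 1 ≤ r → ps f r = -S r := by
    intro r
    induction r using Nat.strong_induction_on with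
    | _ r ih =>
      intro hr
      have h1 := newton' hm r
      simp only [hrev] at h1
      obtain ⟨m, rfl⟩ : ∃ m, r = m + 1 := ⟨r - 1, by omega⟩
      have h2 : Finset.Icc 1 (m + 1) = Finset.Ico 1 (m + 1 + 1) := rfl
      rw [h1, hN, h2, Finset.sum_Ico_eq_sum_range, Nat.add_sub_cancel, Finset.sum_range_succ,
        Finset.sum_range_succ', ps_zero_right, zero_mul, add_zero, neg_add, add_comm 1 m,
        Nat.sub_self, hA0, mul_one]
      have h3 : ∑ i ∈ Finset.range m, ps f (i + 1) * A (m + 1 - (i + 1)) =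
          -∑ i ∈ Finset.range m, S (1 + i) * A (m + 1 - (1 + i)) := by
        rw [← Finset.sum_neg_distrib]
        refine Finset.sum_congr rfl fun i hi => ?_
        rw [Finset.mem_range] at hi
        rw [ih (i + 1) (by omega) (by omega), neg_mul, add_comm 1 i]
      rw [h3]
      ring
  have hroots : ∀ r, 1 ≤ r → (f.roots.map fun z => z ^ r).sum = -S r := by
    intro r hr
    have hfac := (IsAlgClosed.splits f).eq_prod_roots
    rw [hm.leadingCoeff, C_1, one_mul] at hfac
    rw [← ps_multiset_prod _ (by omega), ← hfac, hps r hr]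
  have hsmall : ∀ z ∈ f.roots, ‖z‖ ≤ B := by
    intro z hz
    -- Only even power sums are under control, so the bound is applied to the squares.
    have h1 : ‖z ^ 2‖ ≤ B ^ 2 := by
      refine norm_le_of_power_sums (s := f.roots.map fun z => z ^ 2) (C := C) (by positivity) ?_
        (Multiset.mem_map_of_mem _ hz)
      intro μ hμ
      rw [Multiset.map_map]
      simp only [Function.comp_def, ← pow_mul]
      rw [hroots _ (by omega), norm_neg]
      exact hS μ hμ
    rw [norm_pow] at h1
    exact le_of_sq_le_sq h1 hB.le
  rw [← norm_neg, ← hroots ν hν]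
  have h1 : ‖(f.roots.map fun z => z ^ ν).sum‖ ≤ ((f.roots.map fun z => z ^ ν).map norm).sum :=
    norm_multiset_sum_le _
  refine h1.trans ?_
  have h2 := Multiset.sum_le_card_nsmul ((f.roots.map fun z => z ^ ν).map norm) (B ^ ν) (by
    intro x hx
    simp only [Multiset.mem_map] at hx
    obtain ⟨_, ⟨z, hz, rfl⟩, rfl⟩ := hx
    rw [norm_pow]
    exact pow_le_pow_left₀ (norm_nonneg _) (hsmall z hz) _)
  refine h2.trans ?_
  rw [nsmul_eq_mul]
  refine mul_le_mul_of_nonneg_right ?_ (by positivity)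
  rw [Multiset.card_map, Multiset.card_map]
  exact_mod_cast (card_roots' f).trans hle

/-! ### Weil's bound -/

section Weil

variable {p : ℕ} [Fact p.Prime] {F : Type} [Field F] [Algebra (ZMod p) F]

/-- The additive character of `F` induced by a character of the prime field. -/
noncomputable def tchar (F : Type) [Field F] [Algebra (ZMod p) F] (e : AddChar (ZMod p) ℂ) :
    AddChar F ℂ :=
  e.compAddMonoidHom (Algebra.trace (ZMod p) F).toAddMonoidHom

theorem tchar_apply {e : AddChar (ZMod p) ℂ} (x : F) :
    tchar F e x = e (Algebra.trace (ZMod p) F x) := rfl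

theorem tchar_ne_one [Fintype F] {e : AddChar (ZMod p) ℂ} (he : e ≠ 1) : tchar F e ≠ 1 := by
  obtain ⟨a, ha⟩ := AddChar.ne_one_iff.1 he
  obtain ⟨w, hw⟩ := Algebra.trace_surjective (ZMod p) F a
  exact AddChar.ne_one_iff.2 ⟨w, by rwa [tchar_apply, hw]⟩

/-- Weil's bound for additive character sums of polynomials. The weak bound `exp_sum_bound_sq`
over all extensions of even degree controls the even power sums of the reciprocal roots of the
L-function; this pins down their absolute values and removes the unknown constant. -/
theorem weil [Fintype F] {e : AddChar (ZMod p) ℂ} (he : e ≠ 1) {g : F[X]} (hg0 : g.coeff 0 = 0)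
    (hD : ¬ p ∣ g.natDegree) {E : Type} [Field E] [Fintype E] [Algebra F E] :
    ‖∑ x : E, tchar F e (Algebra.trace F E (aeval x g))‖ ≤
      (g.natDegree - 1 : ℕ) * √(Fintype.card F) ^ Module.finrank F E := by
  have hchar : CharP F p := charP_of_injective_algebraMap (algebraMap (ZMod p) F).injective p
  obtain ⟨C, hC⟩ := exp_sum_bound_sq hD
  set B : ℝ := √(Fintype.card F) with hBdef
  have hB : 0 < B := Real.sqrt_pos.2 (by exact_mod_cast Fintype.card_pos)
  have hB2 : B ^ 2 = Fintype.card F := Real.sq_sqrt (Nat.cast_nonneg _)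
  have hcast : (g.natDegree : F) ≠ 0 := by
    rwa [Ne, CharP.cast_eq_zero_iff F p]
  have hD1 : 1 ≤ g.natDegree := Nat.pos_of_ne_zero fun h => by simp [h] at hD
  obtain ⟨v, hv⟩ : ∃ v, Fintype.card F = p ^ v := by
    refine ⟨Module.finrank (ZMod p) F, ?_⟩
    rw [← Nat.card_eq_fintype_card, Module.natCard_eq_pow_finrank (K := ZMod p), Nat.card_zmod]
  have hS : ∀ μ, 1 ≤ μ → ‖primeSum (tchar F e) g (2 * μ)‖ ≤ C * B ^ (2 * μ) := by
    intro μ hμ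
    have : NeZero (2 * μ) := ⟨by omega⟩
    let E' := FiniteField.Extension F p (2 * μ)
    have : Fintype E' := Fintype.ofFinite E'
    have hfin : Module.finrank F E' = 2 * μ := FiniteField.finrank_extension F p (2 * μ)
    have hcard : Fintype.card E' = (p ^ (v * μ)) ^ 2 := by
      rw [← Nat.card_eq_fintype_card, Module.natCard_eq_pow_finrank (K := F), hfin,
        Nat.card_eq_fintype_card, hv]
      ring
    have h1 := hC E' (v * μ) hcard (g.map (algebraMap F E')) (natDegree_map _) e he
    rw [← hfin, primeSum_eq_sum _ hg0]
    have h2 : B ^ Module.finrank F E' = (p : ℝ) ^ (v * μ) := by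
      rw [hfin, pow_mul, hB2, hv]
      push_cast
      ring
    rw [h2]
    refine le_trans (le_of_eq ?_) h1
    congr 1
    refine Finset.sum_congr rfl fun x _ => ?_
    rw [tchar_apply, Algebra.trace_trace, eval_map_algebraMap]
  rw [← primeSum_eq_sum _ hg0]
  exact norm_sum_le_of_newton hD1 (lcoeff_zero _ _)
    (fun j hj => lcoeff_eq_zero g (tchar_ne_one he) hcast hj) (lcoeff_newton _ _) hB hS
    Module.finrank_pos

end Weil

/-! ### Elements with prescribed traces of powers -/

section Count

variable {p : ℕ} [Fact p.Prime] {F : Type} [Field F] [Fintype F] [Algebra (ZMod p) F]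

/-- Orthogonality of characters on `F ^ k`. -/
theorem sum_char_eq {ψ : AddChar F ℂ} (hψ : ψ ≠ 1) [DecidableEq F] {k : ℕ}
    (u : Fin k → F) :
    ∑ a : Fin k → F, ψ (∑ i, a i * u i) =
      if ∀ i, u i = 0 then (Fintype.card F : ℂ) ^ k else 0 := by
  have h1 : ∑ a : Fin k → F, ψ (∑ i, a i * u i) = ∏ i, ∑ b : F, ψ (b * u i) := by
    rw [Finset.prod_univ_sum, Fintype.piFinset_univ]
    refine Finset.sum_congr rfl fun a _ => ?_
    exact map_prod ψ.toMonoidHom (fun i => Multiplicative.ofAdd (a i * u i)) Finset.univ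
  have h2 : ∀ u : F, ∑ b : F, ψ (b * u) = if u = 0 then (Fintype.card F : ℂ) else 0 := by
    intro u
    have := AddChar.sum_mulShift u (AddChar.IsPrimitive.of_ne_one hψ)
    exact_mod_cast this
  rw [h1, Finset.prod_congr rfl fun i _ => h2 (u i)]
  split_ifs with h
  · simp [h]
  · push Not at h
    obtain ⟨i, hi⟩ := h
    exact Finset.prod_eq_zero (Finset.mem_univ i) (if_neg hi)

variable {E : Type} [Field E] [Fintype E] [Algebra F E]

/-- The character sum is the one of the polynomial `∑ a_i X ^ (d (i + 1))`, whose degree is `d` times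
a number between `1` and `k < p`, hence prime to `p`. -/
theorem norm_sum_ne_zero_le {k : ℕ} (hk : k < p) {d : ℕ} (hd : ¬ p ∣ d)
    {e : AddChar (ZMod p) ℂ} (he : e ≠ 1) {a : Fin k → F} (ha : a ≠ 0) [DecidableEq E] :
    ‖∑ y ∈ (Finset.univ : Finset E).erase 0,
      tchar F e (∑ i : Fin k, a i * Algebra.trace F E (y ^ (d * (i + 1))))‖ ≤
      d * k * √(Fintype.card F) ^ Module.finrank F E := by
  set h : F[X] := ∑ i : Fin k, C (a i) * X ^ ((i : ℕ) + 1) with hh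
  have hd0 : 0 < d := Nat.pos_of_ne_zero fun h => hd (by simp [h])
  have hcoeff : ∀ i : Fin k, h.coeff (i + 1) = a i := by
    intro i
    rw [hh, finsetSum_coeff, Finset.sum_eq_single i]
    · simp
    · intro j _ hji
      rw [coeff_C_mul, coeff_X_pow, if_neg, mul_zero]
      intro h
      exact hji (Fin.ext (by omega))
    · simp
  have h0 : h.coeff 0 = 0 := by
    rw [hh, finsetSum_coeff]
    exact Finset.sum_eq_zero fun i _ => by simp [coeff_X_pow]
  have hne : h ≠ 0 := by
    intro h0
    refine ha (funext fun i => ?_)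
    rw [← hcoeff, h0]
    simp
  have hle : h.natDegree ≤ k := by
    refine natDegree_sum_le_of_forall_le _ _ fun i _ => ?_
    exact (natDegree_C_mul_X_pow_le _ _).trans i.2
  have hpos : 0 < h.natDegree := by
    rw [Nat.pos_iff_ne_zero]
    intro hz
    refine hne ?_
    rw [eq_C_of_natDegree_eq_zero hz, h0, C_0]
  set g : F[X] := expand F d h with hg
  have hgdeg : g.natDegree = h.natDegree * d := natDegree_expand d h
  have hg0 : g.coeff 0 = 0 := by
    rw [hg, coeff_expand hd0, if_pos (dvd_zero _), Nat.zero_div, h0]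
  have hpg : ¬ p ∣ g.natDegree := by
    rw [hgdeg, (Fact.out : p.Prime).dvd_mul]
    rintro (h1 | h1)
    · exact absurd (Nat.le_of_dvd hpos h1) (by omega)
    · exact hd h1
  have hterm : ∀ y : E, ∑ i : Fin k, a i * Algebra.trace F E (y ^ (d * (i + 1))) =
      Algebra.trace F E (aeval y g) := by
    intro y
    rw [hg, expand_aeval, hh, map_sum, map_sum]
    refine Finset.sum_congr rfl fun i _ => ?_
    rw [map_mul, aeval_C, map_pow (aeval (y ^ d)), aeval_X, ← pow_mul, ← Algebra.smul_def, map_smul,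
      smul_eq_mul]
  simp only [hterm]
  have hw := weil he hg0 hpg (E := E)
  set R : ℝ := √(Fintype.card F) ^ Module.finrank F E with hR
  have hR1 : 1 ≤ R := by
    refine one_le_pow₀ ?_
    rw [Real.one_le_sqrt]
    exact_mod_cast Fintype.card_pos
  have hzero : tchar F e (Algebra.trace F E (aeval (0 : E) g)) = 1 := by
    rw [aeval_def, eval₂_at_zero, hg0, map_zero, map_zero, AddChar.map_zero_eq_one]
  have hsplit := Finset.sum_erase_add (Finset.univ : Finset E)
    (fun y => tchar F e (Algebra.trace F E (aeval y g))) (Finset.mem_univ 0)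
  rw [hzero] at hsplit
  rw [eq_sub_of_add_eq hsplit]
  have hdeg1 : (1 : ℕ) ≤ g.natDegree := by
    rw [hgdeg]; exact Nat.mul_pos hpos hd0
  calc _ ≤ ‖∑ x : E, tchar F e (Algebra.trace F E (aeval x g))‖ + ‖(1 : ℂ)‖ := norm_sub_le _ _
    _ ≤ (g.natDegree - 1 : ℕ) * R + 1 := by rw [norm_one]; linarith
    _ ≤ (g.natDegree - 1 : ℕ) * R + R := by linarith
    _ = g.natDegree * R := by
        push_cast [hdeg1]
        ring
    _ ≤ d * k * R := by
        refine mul_le_mul_of_nonneg_right ?_ (by linarith)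
        rw [hgdeg]
        exact_mod_cast (by rw [mul_comm]; exact Nat.mul_le_mul_left _ hle)

/-- The number of nonzero `y` whose `d`-th power has prescribed traces of its powers. -/
theorem count_bound {k : ℕ} (hk : k < p) {d : ℕ} (hd : ¬ p ∣ d) (t : Fin k → F) [DecidableEq E]
    [DecidableEq F] :
    |(Fintype.card F : ℝ) ^ k * ((Finset.univ.erase (0 : E)).filter fun y =>
        ∀ i : Fin k, Algebra.trace F E (y ^ (d * (i + 1))) = t i).card - (Fintype.card E - 1)| ≤
      (Fintype.card F : ℝ) ^ k * (d * k * √(Fintype.card F) ^ Module.finrank F E) := by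
  obtain ⟨e, he⟩ : ∃ e : AddChar (ZMod p) ℂ, e ≠ 1 := by
    refine ⟨ZMod.stdAddChar, ?_⟩
    have := ZMod.isPrimitive_stdAddChar p (a := 1) one_ne_zero
    rwa [AddChar.mulShift_one] at this
  have hψ := tchar_ne_one (F := F) he
  set ψ := tchar F e with hψdef
  set s : Finset E := Finset.univ.erase (0 : E) with hs
  set R : ℝ := √(Fintype.card F) ^ Module.finrank F E with hR
  have hR0 : 0 ≤ R := by positivity
  have hcs : (s.card : ℂ) = Fintype.card E - 1 := by
    rw [hs, Finset.card_erase_of_mem (Finset.mem_univ _), Finset.card_univ,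
      Nat.cast_sub Fintype.card_pos, Nat.cast_one]
  let c : (Fin k → F) → ℂ := fun a => ψ (-∑ i, a i * t i)
  let T : (Fin k → F) → ℂ := fun a =>
    ∑ y ∈ s, ψ (∑ i : Fin k, a i * Algebra.trace F E (y ^ (d * (i + 1))))
  have h1 : (Fintype.card F : ℂ) ^ k * (s.filter fun y =>
      ∀ i : Fin k, Algebra.trace F E (y ^ (d * (i + 1))) = t i).card = ∑ a, c a * T a := by
    have : ∀ a, c a * T a = ∑ y ∈ s,
        ψ (∑ i : Fin k, a i * (Algebra.trace F E (y ^ (d * (i + 1))) - t i)) := by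
      intro a
      simp only [c, T]
      rw [Finset.mul_sum]
      refine Finset.sum_congr rfl fun y _ => ?_
      rw [← AddChar.map_add_eq_mul]
      congr 1
      simp only [mul_sub, Finset.sum_sub_distrib]
      ring
    simp only [this]
    rw [Finset.sum_comm]
    simp only [sum_char_eq hψ, sub_eq_zero]
    rw [← Finset.sum_filter, Finset.sum_const, nsmul_eq_mul, mul_comm]
  -- The trivial character gives the main term.
  have h2 : (Fintype.card F : ℂ) ^ k * (s.filter fun y =>
      ∀ i : Fin k, Algebra.trace F E (y ^ (d * (i + 1))) = t i).card - (Fintype.card E - 1) =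
      ∑ a ∈ Finset.univ.erase 0, c a * T a := by
    rw [h1, ← Finset.sum_erase_add _ _ (Finset.mem_univ (0 : Fin k → F))]
    have : c 0 * T 0 = Fintype.card E - 1 := by
      simp only [c, T, Pi.zero_apply, zero_mul, Finset.sum_const_zero, neg_zero,
        AddChar.map_zero_eq_one, one_mul, Finset.sum_const, nsmul_eq_mul, mul_one, hcs]
    rw [this, add_sub_cancel_right]
  have h3 : ‖∑ a ∈ Finset.univ.erase 0, c a * T a‖ ≤
      ∑ a ∈ (Finset.univ.erase 0 : Finset (Fin k → F)), d * k * R := by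
    refine norm_sum_le_of_le _ fun a ha => ?_
    rw [norm_mul, AddChar.norm_apply, one_mul]
    exact norm_sum_ne_zero_le hk hd he (Finset.ne_of_mem_erase ha)
  rw [← h2] at h3
  have h4 : ((Finset.univ.erase 0 : Finset (Fin k → F)).card : ℝ) ≤ (Fintype.card F : ℝ) ^ k := by
    have : (Finset.univ.erase 0 : Finset (Fin k → F)).card ≤ Fintype.card F ^ k := by
      refine (Finset.card_erase_le).trans ?_
      rw [Finset.card_univ, Fintype.card_pi_const]
    exact_mod_cast this
  rw [Finset.sum_const, nsmul_eq_mul] at h3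
  have h5 := h3.trans (mul_le_mul_of_nonneg_right h4 (by positivity))
  rw [← Real.norm_eq_abs, ← Complex.norm_real]
  push_cast
  exact h5

end Count

/-! ### Generators of cyclic groups -/

section Totient

open ArithmeticFunction

theorem sum_abs_moebius {n : ℕ} (hn : n ≠ 0) :
    ∑ d ∈ n.divisors, |(moebius d : ℝ)| = 2 ^ n.primeFactors.card := by
  have h1 : ∀ d ∈ n.divisors, |(moebius d : ℝ)| = if Squarefree d then 1 else 0 := by
    intro d _
    have := abs_moebius (n := d)
    split_ifs at this ⊢ <;> exact_mod_cast this
  rw [Finset.sum_congr rfl h1, ← Finset.sum_filter, Nat.sum_divisors_filter_squarefree hn,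
    Finset.sum_const, Finset.card_powerset, Nat.factors_eq, nsmul_eq_mul, mul_one]
  push_cast
  rfl

theorem sum_moebius_mul_div {n : ℕ} (hn : 0 < n) :
    ∑ d ∈ n.divisors, (moebius d : ℝ) * ((n : ℝ) / d) = n.totient := by
  have h := (sum_eq_iff_sum_mul_moebius_eq (R := ℝ) (f := fun n => (n.totient : ℝ))
    (g := fun n => (n : ℝ))).1 (fun n _ => by exact_mod_cast Nat.sum_totient n) n hn
  rw [← h, Nat.sum_divisorsAntidiagonal (fun a b => (moebius a : ℝ) * (b : ℝ))]
  refine Finset.sum_congr rfl fun d hd => ?_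
  have hdn := Nat.dvd_of_mem_divisors hd
  have hd0 : (d : ℝ) ≠ 0 := by exact_mod_cast (Nat.pos_of_dvd_of_pos hdn hn).ne'
  rw [Nat.cast_div hdn hd0]

theorem le_two_pow_mul_totient (n : ℕ) : n ≤ 2 ^ n.primeFactors.card * n.totient := by
  have h1 := Nat.totient_mul_prod_primeFactors n
  have h2 : ∏ p ∈ n.primeFactors, p ≤ 2 ^ n.primeFactors.card * ∏ p ∈ n.primeFactors, (p - 1) := by
    rw [← Finset.prod_const, ← Finset.prod_mul_distrib]
    refine Finset.prod_le_prod' fun p hp => ?_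
    have := (Nat.prime_of_mem_primeFactors hp).two_le
    omega
  have h3 : 0 < ∏ p ∈ n.primeFactors, (p - 1) := by
    refine Finset.prod_pos fun p hp => ?_
    have := (Nat.prime_of_mem_primeFactors hp).two_le
    omega
  refine Nat.le_of_mul_le_mul_right ?_ h3
  rw [← h1]
  calc _ ≤ n.totient * (2 ^ n.primeFactors.card * ∏ p ∈ n.primeFactors, (p - 1)) :=
        Nat.mul_le_mul_left _ h2
    _ = _ := by ring

theorem sum_moebius_divisors (n : ℕ) :
    ∑ d ∈ n.divisors, (moebius d : ℝ) = if n = 1 then 1 else 0 := by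
  have h := congrArg (fun f : ArithmeticFunction ℤ => f n) coe_zeta_mul_moebius
  simp only [coe_zeta_mul_apply, one_apply] at h
  exact_mod_cast h

end Totient

section Cyclic

variable {G : Type} [CommGroup G] [Fintype G] [DecidableEq G]

/-- In a cyclic group, the `d`-th powers are the elements killed by `|G| / d`, and each is attained
`d` times. -/
theorem card_pow_eq [IsCyclic G] {d : ℕ} (hd : d ∣ Fintype.card G) (x : G) :
    (Finset.univ.filter fun y : G => y ^ d = x).card =
      if x ^ (Fintype.card G / d) = 1 then d else 0 := by
  set N := Fintype.card G with hN
  have hNpos : 0 < N := Fintype.card_pos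
  have hdpos : 0 < d := Nat.pos_of_dvd_of_pos hd hNpos
  have hdN : d * (N / d) = N := Nat.mul_div_cancel' hd
  have hrange : (powMonoidHom d : G →* G).range = (powMonoidHom (N / d) : G →* G).ker := by
    refine Subgroup.eq_of_le_of_card_ge ?_ ?_
    · rintro _ ⟨y, rfl⟩
      rw [MonoidHom.mem_ker, powMonoidHom_apply, powMonoidHom_apply, ← pow_mul, hdN, hN,
        pow_card_eq_one]
    · rw [IsCyclic.card_powMonoidHom_range, IsCyclic.card_powMonoidHom_ker,
        Nat.card_eq_fintype_card, ← hN, Nat.gcd_eq_right hd,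
        Nat.gcd_eq_right ⟨d, by rw [mul_comm, hdN]⟩]
  split_ifs with h
  · have hx : x ∈ (powMonoidHom d : G →* G).range := by
      rw [hrange, MonoidHom.mem_ker, powMonoidHom_apply, h]
    have h1 := MonoidHom.card_fiber_eq_of_mem_range (powMonoidHom d : G →* G) (x := x) (y := 1)
      hx ⟨1, map_one _⟩
    simp only [powMonoidHom_apply] at h1
    rw [h1]
    have h2 := IsCyclic.card_powMonoidHom_ker (G := G) d
    rw [Nat.card_eq_fintype_card (α := G), ← hN, Nat.gcd_eq_right hd] at h2
    refine Eq.trans ?_ h2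
    exact (Nat.subtype_card _ fun y => by simp [MonoidHom.mem_ker]).symm
  · rw [Finset.card_eq_zero, Finset.filter_eq_empty_iff]
    rintro y - rfl
    rw [← pow_mul, hdN, hN, pow_card_eq_one] at h
    exact h rfl

/-- Möbius inversion over the indices of the subgroups that contain `x`. -/
theorem sum_moebius_pow (x : G) :
    ∑ d ∈ (Fintype.card G).divisors, (ArithmeticFunction.moebius d : ℝ) *
      (if x ^ (Fintype.card G / d) = 1 then 1 else 0) =
      if orderOf x = Fintype.card G then 1 else 0 := by
  set N := Fintype.card G with hN
  have hNpos : 0 < N := Fintype.card_pos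
  have hord : orderOf x ∣ N := orderOf_dvd_card
  have hopos : 0 < orderOf x := orderOf_pos x
  have hoN : orderOf x * (N / orderOf x) = N := Nat.mul_div_cancel' hord
  have hquot : N / orderOf x ≠ 0 := fun h => by rw [h, mul_zero] at hoN; omega
  simp only [mul_ite, mul_one, mul_zero]
  rw [← Finset.sum_filter]
  have : N.divisors.filter (fun d => x ^ (N / d) = 1) = (N / orderOf x).divisors := by
    ext d
    rw [Finset.mem_filter, Nat.mem_divisors, Nat.mem_divisors, ← orderOf_dvd_iff_pow_eq_one]
    constructor
    · rintro ⟨⟨h1, -⟩, h2⟩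
      refine ⟨?_, hquot⟩
      obtain ⟨c, hc⟩ := h2
      have h3 : d * (N / d) = N := Nat.mul_div_cancel' h1
      refine ⟨c, ?_⟩
      refine Nat.eq_of_mul_eq_mul_left hopos ?_
      rw [hoN, ← h3, hc]
      ring
    · rintro ⟨⟨c, hc⟩, -⟩
      rw [hc] at hoN
      have hd0 : 0 < d := by
        rcases Nat.eq_zero_or_pos d with h | h
        · rw [h] at hoN; simp at hoN; omega
        · exact h
      have hN' : N = d * (orderOf x * c) := by rw [← hoN]; ring
      refine ⟨⟨⟨_, hN'⟩, hNpos.ne'⟩, c, ?_⟩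
      rw [hN', Nat.mul_div_cancel_left _ hd0]
  rw [this, sum_moebius_divisors]
  have hiff : N / orderOf x = 1 ↔ orderOf x = N := by
    constructor
    · intro h
      rw [h, mul_one] at hoN
      exact hoN
    · intro h
      rw [h, Nat.div_self hNpos]
  simp only [hiff]

/-- If a predicate holds for `x ^ d` with frequency close to `δ` for every divisor `d` of the
order of a cyclic group, then it holds for some generator. -/
theorem exists_generator [IsCyclic G] (P : G → Prop) [DecidablePred P] {δ η : ℝ}
    (hP : ∀ d, d ∣ Fintype.card G →
      |((Finset.univ.filter fun y : G => P (y ^ d)).card : ℝ) - δ * Fintype.card G| ≤ d * η)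
    (hδ : 0 ≤ δ)
    (hη : (4 : ℝ) ^ (Fintype.card G).primeFactors.card * η < δ * Fintype.card G) :
    ∃ x : G, orderOf x = Fintype.card G ∧ P x := by
  set N := Fintype.card G with hN
  have hNpos : 0 < N := Fintype.card_pos
  by_contra hno
  push Not at hno
  -- `n d` counts the `d`-th powers that satisfy `P`; their alternating sum counts the generators.
  let s : Finset G := Finset.univ.filter P
  let n : ℕ → ℝ := fun d => ∑ x ∈ s, if x ^ (N / d) = 1 then 1 else 0
  have hn : ∀ d ∈ N.divisors, |n d - δ * (N / d)| ≤ η := by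
    intro d hd
    have hdN := Nat.dvd_of_mem_divisors hd
    have hd0 : (0 : ℝ) < d := by exact_mod_cast Nat.pos_of_dvd_of_pos hdN hNpos
    have h1 : ((Finset.univ.filter fun y : G => P (y ^ d)).card : ℝ) = d * n d := by
      rw [Finset.card_eq_sum_card_fiberwise (t := s) (f := fun y => y ^ d)
        (fun y hy => by simpa [s] using hy)]
      push_cast
      simp only [n]
      rw [Finset.mul_sum]
      refine Finset.sum_congr rfl fun x hx => ?_
      have h2 : ((Finset.univ.filter fun y : G => P (y ^ d)).filter fun y => y ^ d = x) =
          Finset.univ.filter fun y : G => y ^ d = x := by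
        ext y
        simp only [Finset.mem_filter, Finset.mem_univ, true_and, and_iff_right_iff_imp]
        rintro rfl
        exact (Finset.mem_filter.1 hx).2
      rw [h2, card_pow_eq hdN]
      split_ifs <;> simp
    have h3 := hP d hdN
    rw [h1] at h3
    have h4 : d * n d - δ * N = d * (n d - δ * (N / d)) := by
      field_simp
    rw [h4, abs_mul, abs_of_pos hd0] at h3
    exact le_of_mul_le_mul_left h3 hd0
  have hsum : ∑ d ∈ N.divisors, (ArithmeticFunction.moebius d : ℝ) * n d = 0 := by
    simp only [n, Finset.mul_sum]
    rw [Finset.sum_comm]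
    refine Finset.sum_eq_zero fun x hx => ?_
    rw [sum_moebius_pow, if_neg]
    exact fun h => hno x h (Finset.mem_filter.1 hx).2
  have hmain : ∑ d ∈ N.divisors, (ArithmeticFunction.moebius d : ℝ) * (δ * (N / d)) =
      δ * N.totient := by
    rw [← sum_moebius_mul_div hNpos, Finset.mul_sum]
    refine Finset.sum_congr rfl fun d _ => ?_
    ring
  have hle : δ * N.totient ≤ 2 ^ N.primeFactors.card * η := by
    calc δ * N.totient = -∑ d ∈ N.divisors, (ArithmeticFunction.moebius d : ℝ) *
          (n d - δ * (N / d)) := by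
          simp only [mul_sub, Finset.sum_sub_distrib]
          rw [hsum, hmain]
          ring
      _ ≤ |∑ d ∈ N.divisors, (ArithmeticFunction.moebius d : ℝ) * (n d - δ * (N / d))| :=
          neg_le_abs _
      _ ≤ ∑ d ∈ N.divisors, |(ArithmeticFunction.moebius d : ℝ) * (n d - δ * (N / d))| :=
          Finset.abs_sum_le_sum_abs _ _
      _ ≤ ∑ d ∈ N.divisors, |(ArithmeticFunction.moebius d : ℝ)| * η := by
          refine Finset.sum_le_sum fun d hd => ?_
          rw [abs_mul]
          exact mul_le_mul_of_nonneg_left (hn d hd) (abs_nonneg _)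
      _ = 2 ^ N.primeFactors.card * η := by
          rw [← Finset.sum_mul, sum_abs_moebius hNpos.ne']
  have htot : (N : ℝ) ≤ 2 ^ N.primeFactors.card * N.totient := by
    exact_mod_cast le_two_pow_mul_totient N
  have : δ * N ≤ 4 ^ N.primeFactors.card * η := by
    calc δ * N ≤ δ * (2 ^ N.primeFactors.card * N.totient) := by gcongr
      _ = 2 ^ N.primeFactors.card * (δ * N.totient) := by ring
      _ ≤ 2 ^ N.primeFactors.card * (2 ^ N.primeFactors.card * η) := by gcongr
      _ = 4 ^ N.primeFactors.card * η := by
          rw [← mul_assoc, ← mul_pow]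
          norm_num
  linarith

end Cyclic

/-! ### Comparison of the main term and the error term -/

section Arithmetic

/-- The primes with `2 ≤ p ^ δ` contribute nothing to the constant, and only finitely many
primes are smaller. -/
theorem exists_two_pow_omega_le {δ : ℝ} (hδ : 0 < δ) :
    ∃ C : ℝ, 1 ≤ C ∧ ∀ N : ℕ, N ≠ 0 → (2 : ℝ) ^ N.primeFactors.card ≤ C * (N : ℝ) ^ δ := by
  set B : ℕ := ⌈(2 : ℝ) ^ (1 / δ)⌉₊ with hB
  refine ⟨2 ^ B, one_le_pow₀ (by norm_num), fun N hN => ?_⟩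
  have h1 : (2 : ℝ) ^ N.primeFactors.card ≤
      ∏ p ∈ N.primeFactors, ((if p < B then 2 else 1) * (p : ℝ) ^ δ) := by
    rw [← Finset.prod_const]
    refine Finset.prod_le_prod (fun _ _ => by norm_num) fun p hp => ?_
    have hp1 : (1 : ℝ) ≤ p := by exact_mod_cast (Nat.prime_of_mem_primeFactors hp).one_le
    split_ifs with h
    · have := Real.one_le_rpow hp1 hδ.le
      linarith
    · rw [one_mul]
      have h2 : (2 : ℝ) ^ (1 / δ) ≤ p :=
        (Nat.le_ceil _).trans (by exact_mod_cast not_lt.1 h)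
      calc (2 : ℝ) = ((2 : ℝ) ^ (1 / δ)) ^ δ := by
            rw [← Real.rpow_mul (by norm_num), one_div_mul_cancel hδ.ne', Real.rpow_one]
        _ ≤ (p : ℝ) ^ δ := Real.rpow_le_rpow (by positivity) h2 hδ.le
  refine h1.trans ?_
  rw [Finset.prod_mul_distrib]
  refine mul_le_mul ?_ ?_ (by positivity) (by positivity)
  · rw [← Finset.prod_filter, Finset.prod_const]
    refine pow_le_pow_right₀ (by norm_num) ?_
    calc _ ≤ (Finset.range B).card := Finset.card_le_card fun p hp => by
          simpa using (Finset.mem_filter.1 hp).2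
      _ = B := Finset.card_range B
  · rw [Real.finsetProd_rpow _ _ (fun _ _ => by positivity)]
    refine Real.rpow_le_rpow (by positivity) ?_ hδ.le
    rw [← Nat.cast_prod]
    exact Nat.cast_le.2 (Nat.le_of_dvd (Nat.pos_of_ne_zero hN) (Nat.prod_primeFactors_dvd N))

/-- The main term of the count of primitive elements beats the error term once `q` is large
in terms of `ε`. -/
theorem exists_main_gt_error {ε : ℝ} (hε : 0 < ε) :
    ∃ q₀ : ℕ, ∀ q n k : ℕ, q₀ ≤ q → 1 ≤ n → (k : ℝ) < n * (1 / 2 - ε) - 1 →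
      (4 : ℝ) ^ (q ^ n - 1).primeFactors.card * (k * √(q : ℝ) ^ n) <
        1 / (q : ℝ) ^ k * ((q ^ n - 1 : ℕ) : ℝ) := by
  obtain ⟨C, hC1, hC⟩ := exists_two_pow_omega_le (δ := ε / 4) (by positivity)
  refine ⟨max 2 (max ⌈(2 : ℝ) ^ (2 / ε)⌉₊ (⌈2 * C ^ 2⌉₊ + 1)), fun q n k hq hn hk => ?_⟩
  have hq2 : 2 ≤ q := (le_max_left _ _).trans hq
  have hqε : ⌈(2 : ℝ) ^ (2 / ε)⌉₊ ≤ q := (le_max_left _ _).trans ((le_max_right _ _).trans hq)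
  have hqC : ⌈2 * C ^ 2⌉₊ + 1 ≤ q := (le_max_right _ _).trans ((le_max_right _ _).trans hq)
  set x : ℝ := (q : ℝ) with hx
  have hx2 : 2 ≤ x := by rw [hx]; exact_mod_cast hq2
  have hx0 : 0 < x := by linarith
  have hxC : 2 * C ^ 2 < x := (Nat.le_ceil _).trans_lt (by rw [hx]; exact_mod_cast hqC)
  have hxε : 2 ≤ x ^ (ε / 2) := by
    calc (2 : ℝ) = ((2 : ℝ) ^ (2 / ε)) ^ (ε / 2) := by
          rw [← Real.rpow_mul (by norm_num), show 2 / ε * (ε / 2) = 1 by field_simp,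
            Real.rpow_one]
      _ ≤ x ^ (ε / 2) := Real.rpow_le_rpow (by positivity)
          ((Nat.le_ceil _).trans (by rw [hx]; exact_mod_cast hqε)) (by positivity)
  have hQ2 : 2 ≤ q ^ n := hq2.trans (Nat.le_self_pow (by omega) q)
  have hQ2' : 2 ≤ x ^ n := by rw [hx]; exact_mod_cast hQ2
  set N := q ^ n - 1 with hN
  have hNQ : (N : ℝ) = x ^ n - 1 := by
    rw [hN, Nat.cast_sub (by omega)]
    push_cast
    rfl
  have hn0 : (0 : ℝ) < n := by exact_mod_cast hn
  have hkn : (k : ℝ) < n := by nlinarith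
  -- `4 ^ ω`, `k` and `x ^ k` contribute `n ε / 2`, `n ε / 2` and `n (1 / 2 - ε) - 1` to the exponent
  -- of `x`; what remains besides `n` is `-1`, which beats the constant.
  have h4 : (4 : ℝ) ^ N.primeFactors.card ≤ C ^ 2 * x ^ (n * (ε / 2)) := by
    have h := hC N (by omega)
    have h' : (N : ℝ) ^ (ε / 4) ≤ x ^ (n * (ε / 4)) := by
      rw [Real.rpow_mul hx0.le, Real.rpow_natCast]
      exact Real.rpow_le_rpow (Nat.cast_nonneg _) (by linarith) (by positivity)
    calc (4 : ℝ) ^ N.primeFactors.card = ((2 : ℝ) ^ N.primeFactors.card) ^ 2 := by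
          rw [← pow_mul, mul_comm, pow_mul]
          norm_num
      _ ≤ (C * x ^ (n * (ε / 4))) ^ 2 := by
          refine pow_le_pow_left₀ (by positivity) (h.trans ?_) 2
          exact mul_le_mul_of_nonneg_left h' (by linarith)
      _ = C ^ 2 * x ^ (n * (ε / 2)) := by
          rw [mul_pow, ← Real.rpow_natCast (x ^ (n * (ε / 4))) 2, ← Real.rpow_mul hx0.le]
          congr 2
          push_cast
          ring
  have hsq : √x ^ n = x ^ ((n : ℝ) / 2) := by
    rw [Real.sqrt_eq_rpow, ← Real.rpow_natCast, ← Real.rpow_mul hx0.le]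
    congr 1
    ring
  have hkx : (k : ℝ) ≤ x ^ (n * (ε / 2)) := by
    calc (k : ℝ) ≤ n := hkn.le
      _ ≤ 2 ^ n := by exact_mod_cast Nat.lt_two_pow_self.le
      _ ≤ (x ^ (ε / 2)) ^ n := pow_le_pow_left₀ (by norm_num) hxε n
      _ = x ^ (n * (ε / 2)) := by
          rw [mul_comm, Real.rpow_mul hx0.le, Real.rpow_natCast]
  have hxk : x ^ k ≤ x ^ (n * (1 / 2 - ε) - 1) := by
    rw [← Real.rpow_natCast]
    exact Real.rpow_le_rpow_of_exponent_le (by linarith) hk.le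
  rw [hsq, hNQ, one_div, inv_mul_eq_div, lt_div_iff₀ (by positivity)]
  calc (4 : ℝ) ^ N.primeFactors.card * (k * x ^ ((n : ℝ) / 2)) * x ^ k
      ≤ C ^ 2 * x ^ (n * (ε / 2)) * (x ^ (n * (ε / 2)) * x ^ ((n : ℝ) / 2)) *
        x ^ (n * (1 / 2 - ε) - 1) := by gcongr
    _ = C ^ 2 * x ^ (n * (ε / 2) + (n * (ε / 2) + (n : ℝ) / 2) + (n * (1 / 2 - ε) - 1)) := by
        rw [Real.rpow_add hx0, Real.rpow_add hx0 (n * (ε / 2)) (n * (ε / 2) + (n : ℝ) / 2),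
          Real.rpow_add hx0 (n * (ε / 2)) ((n : ℝ) / 2)]
        ring
    _ = C ^ 2 * (x ^ n / x) := by
        rw [← Real.rpow_natCast x n, ← Real.rpow_sub_one hx0.ne']
        congr 2
        ring
    _ < x / 2 * (x ^ n / x) := by
        refine mul_lt_mul_of_pos_right (by linarith) (by positivity)
    _ = x ^ n / 2 := by field_simp
    _ ≤ x ^ n - 1 := by linarith

end Arithmetic

/-! ### Primitive polynomials with prescribed coefficients -/

section Assembly

/-- A generator of the multiplicative group generates the field extension. -/
theorem natDegree_minpoly_of_generator {F E : Type} [Field F] [Field E] [Finite E] [Algebra F E]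
    {x : Eˣ} (hx : orderOf x = Nat.card Eˣ) :
    (minpoly F (x : E)).natDegree = Module.finrank F E := by
  have hint : IsIntegral F (x : E) := by
    have := Module.Finite.of_finite (R := F) (M := E)
    exact IsIntegral.of_finite F _
  have htop : IntermediateField.adjoin F {(x : E)} = ⊤ := by
    rw [eq_top_iff]
    rintro y -
    rcases eq_or_ne y 0 with rfl | hy
    · exact zero_mem _
    · have h1 : Units.mk0 y hy ∈ Subgroup.zpowers x := by
        rw [(Subgroup.zpowers x).eq_top_of_card_eq (by rw [Nat.card_zpowers, hx])]
        trivial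
      obtain ⟨m, hm⟩ := Subgroup.mem_zpowers_iff.1 h1
      have h2 : (x : E) ^ m = y := by
        have := congrArg (Units.val) hm
        simpa using this
      rw [← h2]
      exact zpow_mem (IntermediateField.mem_adjoin_simple_self F (x : E)) m
  rw [← IntermediateField.adjoin.finrank hint, htop, IntermediateField.finrank_top']

/-- A monic polynomial is determined in its leading coefficients by its first power sums. -/
theorem coeff_eq_of_ps_eq {K : Type} [Field K] {p : ℕ} [CharP K p] {f h : K[X]} {n k : ℕ}
    (hf : f.Monic) (hh : h.Monic) (hfn : f.natDegree = n) (hhn : h.natDegree = n) (hk : k < p)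
    (hkn : k ≤ n) (hps : ∀ i, 1 ≤ i → i ≤ k → ps f i = ps h i) {i : ℕ} (hi : i ≤ k) :
    f.coeff (n - i) = h.coeff (n - i) := by
  have := reverse_coeff_eq_of_ps_eq hf hh hk hps i hi
  rwa [coeff_reverse_eq hfn, coeff_reverse_eq hhn, if_pos (hi.trans hkn),
    if_pos (hi.trans hkn)] at this

/-- A monic polynomial of degree `n` with the prescribed coefficients, and zeros below them. -/
noncomputable def template {F : Type} [Field F] (n : ℕ) {k : ℕ} (c : Fin k → F) : F[X] :=
  X ^ n + ∑ i : Fin k, C (c i) * X ^ (n - (i + 1))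

theorem degree_template_tail {F : Type} [Field F] {n k : ℕ} (hkn : k ≤ n) (c : Fin k → F) :
    (∑ i : Fin k, C (c i) * X ^ (n - ((i : ℕ) + 1))).degree < (n : WithBot ℕ) := by
  refine (degree_sum_le _ _).trans_lt ((Finset.sup_lt_iff (WithBot.bot_lt_coe n)).2 fun i _ => ?_)
  refine (degree_C_mul_X_pow_le _ _).trans_lt ?_
  have := i.2
  exact Nat.cast_lt.2 (by omega : n - ((i : ℕ) + 1) < n)

theorem monic_template {F : Type} [Field F] {n k : ℕ} (hkn : k ≤ n) (c : Fin k → F) :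
    (template n c).Monic :=
  monic_X_pow_add (degree_template_tail hkn c)

theorem natDegree_template {F : Type} [Field F] {n k : ℕ} (hkn : k ≤ n) (c : Fin k → F) :
    (template n c).natDegree = n := by
  refine natDegree_eq_of_degree_eq_some ?_
  rw [template, degree_add_eq_left_of_degree_lt, degree_X_pow]
  rw [degree_X_pow]
  exact degree_template_tail hkn c

theorem coeff_template {F : Type} [Field F] {n k : ℕ} (hkn : k ≤ n) (c : Fin k → F) (i : Fin k) :
    (template n c).coeff (n - ((i : ℕ) + 1)) = c i := by
  have hi := i.2
  rw [template, coeff_add, coeff_X_pow, if_neg (by omega), zero_add, finsetSum_coeff,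
    Finset.sum_eq_single i]
  · rw [coeff_C_mul, coeff_X_pow, if_pos rfl, mul_one]
  · intro j _ hj
    have hj' := j.2
    have : (j : ℕ) ≠ i := fun h => hj (Fin.ext h)
    rw [coeff_C_mul, coeff_X_pow, if_neg (by omega), mul_zero]
  · simp

/-- Existence of a primitive element whose first traces of powers are prescribed. -/
theorem exists_generator_trace {p : ℕ} [Fact p.Prime] {F : Type} [Field F] [Fintype F]
    [Algebra (ZMod p) F] {E : Type} [Field E] [Fintype E] [Algebra F E] {k : ℕ} (hk : k < p)
    (t : Fin k → F)
    (hmain : (4 : ℝ) ^ (Fintype.card F ^ Module.finrank F E - 1).primeFactors.card *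
        (k * √(Fintype.card F : ℝ) ^ Module.finrank F E) <
      1 / (Fintype.card F : ℝ) ^ k * ((Fintype.card F ^ Module.finrank F E - 1 : ℕ) : ℝ)) :
    ∃ x : Eˣ, orderOf x = Nat.card Eˣ ∧
      ∀ i : Fin k, Algebra.trace F E ((x : E) ^ ((i : ℕ) + 1)) = t i := by
  classical
  have hcard : Fintype.card E = Fintype.card F ^ Module.finrank F E := Module.card_eq_pow_finrank
  have hunits : Fintype.card Eˣ = Fintype.card F ^ Module.finrank F E - 1 := by
    rw [Fintype.card_units, hcard]
  rw [← hunits] at hmain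
  have hpE : p ∣ Fintype.card E := by
    have : CharP F p := charP_of_injective_algebraMap (algebraMap (ZMod p) F).injective p
    have : CharP E p := charP_of_injective_algebraMap (algebraMap F E).injective p
    exact (CharP.cast_eq_zero_iff E p _).1 (Nat.cast_card_eq_zero E)
  have hqk : (0 : ℝ) < (Fintype.card F : ℝ) ^ k := by
    have : 0 < Fintype.card F := Fintype.card_pos
    positivity
  have hP : ∀ d, d ∣ Fintype.card Eˣ →
      |((Finset.univ.filter fun y : Eˣ =>
        ∀ i : Fin k, Algebra.trace F E (((y ^ d : Eˣ) : E) ^ ((i : ℕ) + 1)) = t i).card : ℝ) -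
          1 / (Fintype.card F : ℝ) ^ k * Fintype.card Eˣ| ≤
        d * (k * √(Fintype.card F : ℝ) ^ Module.finrank F E) := by
    intro d hd
    have hpd : ¬ p ∣ d := by
      intro h
      have h1 : p ∣ Fintype.card E - 1 := by
        rw [← Fintype.card_units]
        exact h.trans hd
      have h2 : p ∣ 1 := by
        have h3 : 0 < Fintype.card E := Fintype.card_pos
        have := (Nat.dvd_sub_iff_right h3 hpE).1 h1
        exact this
      exact (Fact.out : p.Prime).one_lt.ne' (Nat.dvd_one.1 h2)
    have hb := count_bound (E := E) hk hpd t
    have hc : (Finset.univ.filter fun y : Eˣ =>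
        ∀ i : Fin k, Algebra.trace F E (((y ^ d : Eˣ) : E) ^ ((i : ℕ) + 1)) = t i).card =
        ((Finset.univ.erase (0 : E)).filter fun y =>
          ∀ i : Fin k, Algebra.trace F E (y ^ (d * ((i : ℕ) + 1))) = t i).card := by
      refine Finset.card_bij (fun y _ => (y : E)) ?_ (fun a _ b _ h => Units.ext h) ?_
      · intro y hy
        have := (Finset.mem_filter.1 hy).2
        simp only [Units.val_pow_eq_pow_val, ← pow_mul] at this
        exact Finset.mem_filter.2 ⟨Finset.mem_erase.2 ⟨y.ne_zero, Finset.mem_univ _⟩, this⟩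
      · intro y hy
        have h1 := Finset.mem_filter.1 hy
        refine ⟨Units.mk0 y (Finset.mem_erase.1 h1.1).1, Finset.mem_filter.2
          ⟨Finset.mem_univ _, ?_⟩, rfl⟩
        simpa only [Units.val_pow_eq_pow_val, ← pow_mul, Units.val_mk0] using h1.2
    have hN : ((Fintype.card Eˣ : ℕ) : ℝ) = Fintype.card E - 1 := by
      rw [Fintype.card_units, Nat.cast_sub Fintype.card_pos, Nat.cast_one]
    rw [hc, hN]
    rw [← mul_le_mul_iff_right₀ hqk]
    calc _ = |(Fintype.card F : ℝ) ^ k * _ - (Fintype.card E - 1)| := by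
          rw [← abs_of_pos hqk, ← abs_mul, abs_of_pos hqk, mul_sub, ← mul_assoc,
            mul_one_div_cancel hqk.ne', one_mul]
      _ ≤ _ := hb
      _ = _ := by ring
  obtain ⟨x, hx, hxt⟩ := exists_generator
    (fun y : Eˣ => ∀ i : Fin k, Algebra.trace F E ((y : E) ^ ((i : ℕ) + 1)) = t i)
    hP (by positivity) hmain
  exact ⟨x, by rw [hx, Nat.card_eq_fintype_card], hxt⟩

end Assembly

end CoeffThm

/-- (Coefficients Theorem) For every `ε > 0` there is `q_ε` such that for every odd prime
power `q = p^v ≥ q_ε` and all `n, k ≥ 1` with `k < p` and `k < n(1/2 − ε) − 1`, and every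
prescribed tuple `c₁, …, c_k` in a field `F` with `q` elements, there is a monic primitive
polynomial of degree `n` over `F` whose coefficients of `x^{n−1}, …, x^{n−k}` are
`c₁, …, c_k`. -/
theorem stmt18 :
    ∀ ε : ℝ, 0 < ε → ∃ qε : ℕ,
      ∀ p v q : ℕ, Nat.Prime p → Odd q → 1 ≤ v → q = p ^ v → qε ≤ q →
        ∀ n k : ℕ, 1 ≤ n → 1 ≤ k → k < p → (k : ℝ) < (n : ℝ) * (1 / 2 - ε) - 1 →
          ∀ (F : Type) [Field F] [Fintype F], Fintype.card F = q →
            ∀ c : Fin k → F,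
              ∃ f : Polynomial F, f.Monic ∧ f.natDegree = n ∧
                (∀ i : Fin k, f.coeff (n - ((i : ℕ) + 1)) = c i) ∧
                ∃ α : AlgebraicClosure F,
                  Polynomial.aeval α f = 0 ∧ orderOf α = q ^ n - 1 := by
  classical
  intro ε hε
  obtain ⟨q₀, hq₀⟩ := CoeffThm.exists_main_gt_error hε
  refine ⟨q₀, fun p v q hp _ hv hq hqq n k hn _ hkp hk F _ _ hF c => ?_⟩
  have hkn : k ≤ n := by
    have hn0 : (0 : ℝ) < n := by exact_mod_cast hn
    have : (k : ℝ) ≤ n := by nlinarith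
    exact_mod_cast this
  have : Fact p.Prime := ⟨hp⟩
  have : NeZero n := ⟨by omega⟩
  have : CharP F p := by
    refine charP_of_card_eq_prime_pow (f := v) ?_
    rw [hF, hq]
  let : Algebra (ZMod p) F := ZMod.algebra F p
  let E := FiniteField.Extension F p n
  have : Finite E := inferInstanceAs (Finite (FiniteField.Extension F p n))
  let : Fintype E := Fintype.ofFinite E
  have hfr : Module.finrank F E = n := FiniteField.finrank_extension F p n
  have hmain := hq₀ q n k hqq hn hk
  obtain ⟨x, hx, hxt⟩ := CoeffThm.exists_generator_trace (E := E) hkp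
    (fun i : Fin k => CoeffThm.ps (CoeffThm.template n c) (i + 1)) (by rw [hF, hfr]; exact hmain)
  have hdeg : (minpoly F (x : E)).natDegree = n := by
    rw [CoeffThm.natDegree_minpoly_of_generator hx, hfr]
  have hint : IsIntegral F (x : E) := by
    have := Module.Finite.of_finite (R := F) (M := E)
    exact IsIntegral.of_finite F _
  have hmonic := minpoly.monic hint
  refine ⟨minpoly F (x : E), hmonic, hdeg, fun i => ?_, ?_⟩
  · have hi := i.2
    rw [CoeffThm.coeff_eq_of_ps_eq (p := p) hmonic (CoeffThm.monic_template hkn c) hdeg (CoeffThm.natDegree_template hkn c)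
      hkp hkn ?_ (by omega : (i : ℕ) + 1 ≤ k), CoeffThm.coeff_template hkn]
    intro j hj1 hjk
    have h1 := hxt ⟨j - 1, by omega⟩
    simp only [Nat.sub_add_cancel hj1] at h1
    rw [CoeffThm.trace_pow_eq_ps _ (by omega), hdeg, hfr, Nat.div_self (by omega), Nat.cast_one,
      one_mul] at h1
    exact h1
  · have : Algebra.IsAlgebraic F E := by
      have := Module.Finite.of_finite (R := F) (M := E)
      infer_instance
    let φ : E →ₐ[F] AlgebraicClosure F := IsAlgClosed.lift
    refine ⟨φ x, ?_, ?_⟩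
    · rw [Polynomial.aeval_algHom_apply, minpoly.aeval, map_zero]
    · have h1 : orderOf (φ (x : E)) = orderOf (x : E) :=
        orderOf_injective (φ : E →* AlgebraicClosure F) φ.injective (x : E)
      rw [h1, orderOf_units, hx, Nat.card_eq_fintype_card, Fintype.card_units,
        Module.card_eq_pow_finrank (K := F) (V := E), hfr, hF]
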